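/- arXiv:2302.04786 — 7 statements merged into one kernel-verified Lean document; each statement's English description precedes it below -/
import Mathlib

section
/- Every ordered Banach space (E, ‖·‖) can be renormed by an equivalent norm ‖·‖₀ (satisfying 0 ≤ x ≤ y implies ‖x‖₀ ≤ ‖y‖₀) such that (E, ‖·‖₀) is regularly ordered, i.e., ‖x‖₀ = inf{‖y‖₀ : y ∈ E, −y ≤ x ≤ y} for every x ∈ E. -/
theorem klee_aux
    {E : Type*} [NormedAddCommGroup E] [NormedSpace ℝ E] [CompleteSpace E] [PartialOrder E]
    (hadd : ∀ x y z : E, x ≤ y → x + z ≤ y + z)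
    (hsmul : ∀ (c : ℝ) (x y : E), 0 ≤ c → x ≤ y → c • x ≤ c • y)
    (hclosed : IsClosed {x : E | 0 ≤ x})
    (hgen : ∀ x : E, ∃ u v : E, 0 ≤ u ∧ 0 ≤ v ∧ x = u - v) :
    ∃ C : ℝ, 0 < C ∧ ∀ x : E, ∃ y : E, 0 ≤ y - x ∧ 0 ≤ y + x ∧ ‖y‖ ≤ C * ‖x‖ := by
  classical
  let ι := {u : E // 0 ≤ u ∧ ‖u‖ ≤ 1}
  have hs1 : ∀ f : lp (fun _ : ι => ℝ) 1, Summable fun i => |f i| := by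
    intro f
    have := (lp.memℓp f).summable (by simp)
    simpa using this
  have hn1 : ∀ f : lp (fun _ : ι => ℝ) 1, ‖f‖ = ∑' i, |f i| := by
    intro f
    have := lp.norm_eq_tsum_rpow (p := 1) (by simp) f
    simpa using this
  have hb : ∀ (a : ℝ) (i : ι), ‖a • (i : E)‖ ≤ |a| := by
    intro a i
    rw [norm_smul, Real.norm_eq_abs]
    exact mul_le_of_le_one_right (abs_nonneg _) i.2.2
  have hs : ∀ f : lp (fun _ : ι => ℝ) 1, Summable fun i => f i • (i : E) := fun f =>
    Summable.of_norm_bounded (hs1 f) (fun i => hb _ i)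
  have hs' : ∀ f : lp (fun _ : ι => ℝ) 1, Summable fun i => |f i| • (i : E) := fun f =>
    Summable.of_norm_bounded (hs1 f) (fun i => by simpa using hb |f i| i)
  let T0 : lp (fun _ : ι => ℝ) 1 →ₗ[ℝ] E :=
    { toFun := fun f => ∑' i, f i • (i : E)
      map_add' := by
        intro f g
        rw [← (hs f).tsum_add (hs g)]
        congr 1; ext i
        simp [add_smul]
      map_smul' := by
        intro c f
        simp only [RingHom.id_apply]
        rw [← (hs f).tsum_const_smul]
        congr 1; ext i
        simp [mul_smul] }
  let T : lp (fun _ : ι => ℝ) 1 →L[ℝ] E := T0.mkContinuous 1 (by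
    intro f
    rw [one_mul, hn1]
    exact tsum_of_norm_bounded (hs1 f).hasSum (fun i => hb _ i))
  have hT : ∀ f, T f = ∑' i, f i • (i : E) := fun f => rfl
  have hpos : ∀ u : E, 0 ≤ u → ∃ f, T f = u := by
    intro u hu
    by_cases h0 : u = 0
    · exact ⟨0, by simp [h0]⟩
    have hn : ‖u‖ ≠ 0 := norm_ne_zero_iff.2 h0
    let i : ι := ⟨‖u‖⁻¹ • u, by simpa using hsmul (‖u‖⁻¹) 0 u (by positivity) hu, by
      rw [norm_smul, norm_inv, norm_norm, inv_mul_cancel₀ hn]⟩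
    refine ⟨lp.single 1 i ‖u‖, ?_⟩
    rw [hT, tsum_eq_single i]
    · simp [i, smul_smul, hn]
    · intro j hj
      simp [hj]
  have hsurj : Function.Surjective T := by
    intro x
    obtain ⟨u, v, hu, hv, rfl⟩ := hgen x
    obtain ⟨f, rfl⟩ := hpos u hu
    obtain ⟨g, rfl⟩ := hpos v hv
    exact ⟨f - g, map_sub _ _ _⟩
  obtain ⟨C, hC, h⟩ := T.exists_preimage_norm_le hsurj
  have hsum : ∀ g : ι → ℝ, (∀ i, 0 ≤ g i) → Summable (fun i => g i • (i : E)) →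
      0 ≤ ∑' i, g i • (i : E) := by
    intro g hg hgs
    have hfin : ∀ s : Finset ι, 0 ≤ ∑ i ∈ s, g i • (i : E) := by
      intro s
      induction s using Finset.induction_on with
      | empty => simp
      | insert a s ha ih =>
        rw [Finset.sum_insert ha]
        have h1 : 0 ≤ g a • (a : E) := by simpa using hsmul (g a) 0 a (hg a) a.2.1
        have h2 := hadd _ _ (∑ i ∈ s, g i • (i : E)) h1
        rw [zero_add] at h2
        exact ih.trans h2
    exact hclosed.mem_of_tendsto hgs.hasSum (Filter.Eventually.of_forall hfin)
  refine ⟨C, hC, fun x => ?_⟩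
  obtain ⟨f, rfl, hf⟩ := h x
  refine ⟨∑' i, |f i| • (i : E), ?_, ?_, ?_⟩
  · rw [hT, ← (hs' f).tsum_sub (hs f)]
    have := hsum (fun i => |f i| - f i) (fun i => sub_nonneg.2 (le_abs_self _))
      (by simpa [sub_smul] using (hs' f).sub (hs f))
    simpa [sub_smul] using this
  · rw [hT, ← (hs' f).tsum_add (hs f)]
    have := hsum (fun i => |f i| + f i) (fun i => by linarith [neg_abs_le (f i)])
      (by simpa [add_smul] using (hs' f).add (hs f))
    simpa [add_smul] using this
  · refine le_trans ?_ hf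
    rw [hn1]
    exact tsum_of_norm_bounded (hs1 f).hasSum (fun i => by simpa using hb |f i| i)

/-- **Renorming an ordered Banach space to a regularly ordered one.**
Every ordered Banach space `(E, ‖·‖)` admits an equivalent norm `N` (monotone on
`0 ≤ x ≤ y`) for which `E` is regularly ordered:
`N x = inf {N y : -y ≤ x ≤ y}` for all `x`. -/
theorem exists_equivalent_regular_norm
    {E : Type*} [NormedAddCommGroup E] [NormedSpace ℝ E] [CompleteSpace E] [PartialOrder E]
    (hadd : ∀ x y z : E, x ≤ y → x + z ≤ y + z)
    (hsmul : ∀ (c : ℝ) (x y : E), 0 ≤ c → x ≤ y → c • x ≤ c • y)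
    (hclosed : IsClosed {x : E | 0 ≤ x})
    (hgen : ∀ x : E, ∃ u v : E, 0 ≤ u ∧ 0 ≤ v ∧ x = u - v)
    (hnormmono : ∀ x y : E, 0 ≤ x → x ≤ y → ‖x‖ ≤ ‖y‖) :
    ∃ N : E → ℝ,
      -- `N` is a norm
      (∀ x : E, N x = 0 ↔ x = 0) ∧
      (∀ (c : ℝ) (x : E), N (c • x) = |c| * N x) ∧
      (∀ x y : E, N (x + y) ≤ N x + N y) ∧
      -- `N` is equivalent to the original norm
      (∃ c C : ℝ, 0 < c ∧ 0 < C ∧ ∀ x : E, c * ‖x‖ ≤ N x ∧ N x ≤ C * ‖x‖) ∧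
      -- `N` is monotone on order intervals `0 ≤ x ≤ y`
      (∀ x y : E, 0 ≤ x → x ≤ y → N x ≤ N y) ∧
      -- `(E, N)` is regularly ordered
      (∀ x : E, N x = sInf {r : ℝ | ∃ y : E, -y ≤ x ∧ x ≤ y ∧ r = N y}) := by
  haveI : IsOrderedAddMonoid E :=
    { add_le_add_left := fun a b h c => hadd a b c h }
  obtain ⟨C, hC, hK⟩ := klee_aux hadd hsmul hclosed hgen
  have hK' : ∀ x : E, ∃ y : E, -y ≤ x ∧ x ≤ y ∧ ‖y‖ ≤ C * ‖x‖ := by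
    intro x
    obtain ⟨y, h1, h2, h3⟩ := hK x
    exact ⟨y, neg_le_iff_add_nonneg'.2 h2, sub_nonneg.1 h1, h3⟩
  have hy0 : ∀ x y : E, -y ≤ x → x ≤ y → 0 ≤ y := by
    intro x y h1 h2
    have h3 : 0 ≤ y + y := neg_le_iff_add_nonneg.1 (h1.trans h2)
    have := hsmul (1/2) _ _ (by norm_num) h3
    rwa [smul_zero, ← two_smul ℝ y, smul_smul, show (1/2 : ℝ) * 2 = 1 by norm_num, one_smul] at this
  let S : E → Set ℝ := fun x => {r : ℝ | ∃ y : E, -y ≤ x ∧ x ≤ y ∧ r = ‖y‖}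
  let N : E → ℝ := fun x => sInf (S x)
  have hne : ∀ x, (S x).Nonempty := fun x => by
    obtain ⟨y, h1, h2, h3⟩ := hK' x
    exact ⟨_, y, h1, h2, rfl⟩
  have hbd : ∀ x, BddBelow (S x) := fun x => ⟨0, by rintro _ ⟨y, -, -, rfl⟩; positivity⟩
  have hle : ∀ x y : E, -y ≤ x → x ≤ y → N x ≤ ‖y‖ := fun x y h1 h2 =>
    csInf_le (hbd x) ⟨y, h1, h2, rfl⟩
  have hge : ∀ (x : E) (b : ℝ), (∀ y, -y ≤ x → x ≤ y → b ≤ ‖y‖) → b ≤ N x := fun x b h =>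
    le_csInf (hne x) (by rintro _ ⟨y, h1, h2, rfl⟩; exact h y h1 h2)
  have hNpos : ∀ x : E, 0 ≤ x → N x = ‖x‖ := fun x hx =>
    le_antisymm (hle x x ((neg_nonpos.2 hx).trans hx) le_rfl)
      (hge x _ fun y _ h2 => hnormmono x y hx h2)
  have hlow : ∀ x : E, (1/3) * ‖x‖ ≤ N x := by
    intro x
    refine hge x _ fun y h1 h2 => ?_
    have h3 : 0 ≤ x + y := neg_le_iff_add_nonneg.1 h1
    have h4 := hnormmono (x + y) (y + y) h3 (by gcongr)
    have h5 : ‖x‖ ≤ ‖x + y‖ + ‖y‖ := by simpa using norm_sub_le (x + y) y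
    have h6 := norm_add_le y y
    linarith
  have hup : ∀ x : E, N x ≤ C * ‖x‖ := by
    intro x
    obtain ⟨y, h1, h2, h3⟩ := hK' x
    exact (hle x y h1 h2).trans h3
  have hN0 : N 0 = 0 := by rw [hNpos 0 le_rfl, norm_zero]
  have hhom : ∀ (c : ℝ) (x : E), |c| * N x ≤ N (c • x) := by
    intro c x
    by_cases hc : c = 0
    · simp [hc, hN0]
    have hc' : 0 < |c| := abs_pos.2 hc
    refine hge _ _ fun y h1 h2 => ?_
    have key : N x ≤ ‖|c|⁻¹ • y‖ := by
      have a1 := hsmul |c|⁻¹ _ _ (by positivity) h1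
      have a2 := hsmul |c|⁻¹ _ _ (by positivity) h2
      rw [smul_neg] at a1
      rw [smul_smul] at a1 a2
      rcases lt_or_gt_of_ne hc with h | h
      · have e : |c|⁻¹ * c = -1 := by rw [abs_of_neg h]; field_simp
        rw [e, neg_one_smul] at a1 a2
        exact hle _ _ (neg_le.1 a2) (neg_le_neg_iff.1 a1)
      · have e : |c|⁻¹ * c = 1 := by rw [abs_of_pos h]; field_simp
        rw [e, one_smul] at a1 a2
        exact hle _ _ a1 a2
    rw [norm_smul, norm_inv, Real.norm_eq_abs, abs_abs] at key
    calc |c| * N x ≤ |c| * (|c|⁻¹ * ‖y‖) := by gcongr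
      _ = ‖y‖ := by field_simp
  refine ⟨N, ?_, ?_, ?_, ⟨1/3, C, by norm_num, hC, fun x => ⟨hlow x, hup x⟩⟩, ?_, ?_⟩
  · intro x
    constructor
    · intro h
      have := hlow x
      rw [h] at this
      exact norm_le_zero_iff.1 (by linarith)
    · rintro rfl; exact hN0
  · intro c x
    refine le_antisymm ?_ (hhom c x)
    by_cases hc : c = 0
    · simp [hc, hN0]
    have hc' : 0 < |c| := abs_pos.2 hc
    have := hhom c⁻¹ (c • x)
    rw [smul_smul, inv_mul_cancel₀ hc, one_smul, abs_inv] at this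
    rwa [inv_mul_le_iff₀ hc'] at this
  · intro x z
    rw [← sub_le_iff_le_add]
    refine hge _ _ fun y h1 h2 => ?_
    rw [sub_le_comm]
    refine hge _ _ fun w h3 h4 => ?_
    rw [sub_le_iff_le_add]
    refine le_trans (hle _ (w + y) ?_ ?_) (norm_add_le w y)
    · rw [add_comm x z, neg_add]; exact add_le_add h3 h1
    · rw [add_comm x z]; exact add_le_add h4 h2
  · intro x y hx hxy
    rw [hNpos x hx, hNpos y (hx.trans hxy)]
    exact hnormmono x y hx hxy
  · intro x
    change sInf (S x) = _
    congr 1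
    ext r
    constructor
    · rintro ⟨y, h1, h2, h3⟩
      exact ⟨y, h1, h2, by rw [hNpos y (hy0 x y h1 h2)]; exact h3⟩
    · rintro ⟨y, h1, h2, h3⟩
      exact ⟨y, h1, h2, by rw [hNpos y (hy0 x y h1 h2)] at h3; exact h3⟩
end

section
/- Let E be a regularly ordered Banach space. Then the topological dual E*, ordered by the dual cone E*₊ = {φ ∈ E* : φ(x) ≥ 0 for all x ∈ E₊}, is again a regularly ordered Banach space: E*₊ is closed, proper and generating, 0 ≤ φ ≤ ψ (in the dual order) implies ‖φ‖ ≤ ‖ψ‖, and ‖φ‖ = inf{‖ψ‖ : ψ ∈ E*, −ψ ≤ φ ≤ ψ} for every φ ∈ E*. -/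
/-- The dual cone in the topological dual of an ordered Banach space `E`. -/
def dualPosCone (E : Type*) [NormedAddCommGroup E] [NormedSpace ℝ E] [PartialOrder E] :
    Set (E →L[ℝ] ℝ) :=
  {φ | ∀ x : E, 0 ≤ x → 0 ≤ φ x}

/-- The dual of a regularly ordered Banach space, equipped with the dual cone, is again a
regularly ordered Banach space: the dual cone is closed, proper and generating, the dual
order is compatible with the norm, and the dual norm is regular. -/
theorem dual_regularly_ordered_of_regular
    {E : Type*} [NormedAddCommGroup E] [NormedSpace ℝ E] [CompleteSpace E] [PartialOrder E]
    (hadd : ∀ x y z : E, x ≤ y → x + z ≤ y + z)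
    (hsmul : ∀ (c : ℝ) (x y : E), 0 ≤ c → x ≤ y → c • x ≤ c • y)
    (hclosed : IsClosed {x : E | 0 ≤ x})
    (hgen : ∀ x : E, ∃ u v : E, 0 ≤ u ∧ 0 ≤ v ∧ x = u - v)
    (hnormmono : ∀ x y : E, 0 ≤ x → x ≤ y → ‖x‖ ≤ ‖y‖)
    (hreg : ∀ x : E, ‖x‖ = sInf {r : ℝ | ∃ y : E, -y ≤ x ∧ x ≤ y ∧ r = ‖y‖}) :
    -- the dual cone is closed
    IsClosed (dualPosCone E) ∧
    -- the dual cone is proper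
    (∀ φ : E →L[ℝ] ℝ, φ ∈ dualPosCone E → -φ ∈ dualPosCone E → φ = 0) ∧
    -- the dual cone is generating
    (∀ φ : E →L[ℝ] ℝ, ∃ ψ χ : E →L[ℝ] ℝ,
      ψ ∈ dualPosCone E ∧ χ ∈ dualPosCone E ∧ φ = ψ - χ) ∧
    -- `0 ≤ φ ≤ ψ` in the dual order implies `‖φ‖ ≤ ‖ψ‖`
    (∀ φ ψ : E →L[ℝ] ℝ, φ ∈ dualPosCone E → ψ - φ ∈ dualPosCone E → ‖φ‖ ≤ ‖ψ‖) ∧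
    -- the dual norm is regular
    (∀ φ : E →L[ℝ] ℝ, ‖φ‖ = sInf {r : ℝ | ∃ ψ : E →L[ℝ] ℝ,
      φ + ψ ∈ dualPosCone E ∧ ψ - φ ∈ dualPosCone E ∧ r = ‖ψ‖}) := by
  have hsub : ∀ x y : E, x ≤ y → 0 ≤ y - x := fun x y h => by
    have := hadd _ _ (-x) h
    simpa [sub_eq_add_neg] using this
  have hsub' : ∀ x y : E, 0 ≤ y - x → x ≤ y := fun x y h => by
    have := hadd _ _ x h
    simpa using this
  have hpadd : ∀ x y : E, 0 ≤ x → 0 ≤ y → 0 ≤ x + y := fun x y hx hy => by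
    have := hadd _ _ y hx
    rw [zero_add] at this
    exact hy.trans this
  have hpsmul : ∀ (c : ℝ) (x : E), 0 ≤ c → 0 ≤ x → 0 ≤ c • x := fun c x hc hx => by
    simpa using hsmul c 0 x hc hx
  have hle : ∀ a b : E, 0 ≤ a → 0 ≤ b → ‖a - b‖ ≤ ‖a + b‖ := fun a b ha hb => by
    rw [hreg (a - b)]
    refine csInf_le ⟨0, ?_⟩ ⟨a + b, ?_, ?_, rfl⟩
    · rintro r ⟨y, -, -, rfl⟩
      exact norm_nonneg y
    · apply hsub'
      have := hpadd a a ha ha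
      convert this using 1
      abel
    · apply hsub'
      have := hpadd b b hb hb
      convert this using 1
      abel
  have hex : ∀ (x : E) (ε : ℝ), 0 < ε → ∃ y : E, 0 ≤ y + x ∧ 0 ≤ y - x ∧ ‖y‖ < ‖x‖ + ε := by
    intro x ε hε
    have hne : {r : ℝ | ∃ y : E, -y ≤ x ∧ x ≤ y ∧ r = ‖y‖}.Nonempty := by
      obtain ⟨u, v, hu, hv, rfl⟩ := hgen x
      refine ⟨_, u + v, ?_, ?_, rfl⟩
      · apply hsub'
        have := hpadd u u hu hu
        convert this using 1
        abel
      · apply hsub'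
        have := hpadd v v hv hv
        convert this using 1
        abel
    have hlt : sInf {r : ℝ | ∃ y : E, -y ≤ x ∧ x ≤ y ∧ r = ‖y‖} < ‖x‖ + ε := by
      rw [← hreg x]; linarith
    obtain ⟨r, ⟨y, h1, h2, rfl⟩, h3⟩ := exists_lt_of_csInf_lt hne hlt
    refine ⟨y, ?_, hsub _ _ h2, h3⟩
    have := hsub _ _ h1
    rwa [sub_neg_eq_add, add_comm] at this
  have hdom : ∀ φ ψ : E →L[ℝ] ℝ, φ + ψ ∈ dualPosCone E → ψ - φ ∈ dualPosCone E →
      ‖φ‖ ≤ ‖ψ‖ := by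
    intro φ ψ h1 h2
    refine φ.opNorm_le_bound (norm_nonneg _) fun x => ?_
    have key : ∀ ε : ℝ, 0 < ε → ‖φ x‖ ≤ ‖ψ‖ * (‖x‖ + ε) := by
      intro ε hε
      obtain ⟨y, hy1, hy2, hy3⟩ := hex x ε hε
      have a1 := h1 _ hy1
      have a2 := h1 _ hy2
      have a3 := h2 _ hy1
      have a4 := h2 _ hy2
      simp only [ContinuousLinearMap.add_apply, ContinuousLinearMap.sub_apply, map_add,
        map_sub] at a1 a2 a3 a4
      have h5 : ‖φ x‖ ≤ ψ y := by
        rw [Real.norm_eq_abs, abs_le]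
        constructor <;> linarith
      have h6 : ψ y ≤ ‖ψ‖ * ‖y‖ := (le_abs_self _).trans (ψ.le_opNorm y)
      exact h5.trans (h6.trans (mul_le_mul_of_nonneg_left hy3.le (norm_nonneg _)))
    have ht : Filter.Tendsto (fun ε : ℝ => ‖ψ‖ * (‖x‖ + ε)) (nhdsWithin 0 (Set.Ioi 0))
        (nhds (‖ψ‖ * (‖x‖ + 0))) :=
      ((by fun_prop : Continuous (fun ε : ℝ => ‖ψ‖ * (‖x‖ + ε))).tendsto 0).mono_left
        nhdsWithin_le_nhds
    rw [add_zero] at ht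
    exact ge_of_tendsto ht (by filter_upwards [self_mem_nhdsWithin] with ε hε using key ε hε)
  have hmain : ∀ φ : E →L[ℝ] ℝ, ∃ ψ : E →L[ℝ] ℝ,
      φ + ψ ∈ dualPosCone E ∧ ψ - φ ∈ dualPosCone E ∧ ‖ψ‖ ≤ ‖φ‖ := by
    intro φ
    let s : PointedCone ℝ (E × ℝ) :=
      { carrier := {p | ∃ a b : E, 0 ≤ a ∧ 0 ≤ b ∧ ‖φ‖ * ‖p.1 + (a + b)‖ - φ (a - b) ≤ p.2}
        zero_mem' := ⟨0, 0, le_rfl, le_rfl, by simp⟩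
        smul_mem' := by
          rintro ⟨c, hc⟩ p ⟨a, b, ha, hb, h⟩
          refine ⟨c • a, c • b, hpsmul c a hc ha, hpsmul c b hc hb, ?_⟩
          have e1 : (c • p.1 + (c • a + c • b)) = c • (p.1 + (a + b)) := by
            simp only [smul_add]
          have e2 : c • a - c • b = c • (a - b) := (smul_sub _ _ _).symm
          change ‖φ‖ * ‖c • p.1 + (c • a + c • b)‖ - φ (c • a - c • b) ≤ c * p.2
          rw [e1, e2, norm_smul, map_smul, Real.norm_of_nonneg hc, smul_eq_mul]
          have := mul_le_mul_of_nonneg_left h hc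
          linarith
        add_mem' := by
          rintro p q ⟨a, b, ha, hb, h⟩ ⟨a', b', ha', hb', h'⟩
          refine ⟨a + a', b + b', hpadd _ _ ha ha', hpadd _ _ hb hb', ?_⟩
          have e1 : (p + q).1 + (a + a' + (b + b')) = (p.1 + (a + b)) + (q.1 + (a' + b')) := by
            rw [Prod.fst_add]; abel
          rw [e1, Prod.snd_add]
          have := mul_le_mul_of_nonneg_left
            (norm_add_le (p.1 + (a + b)) (q.1 + (a' + b'))) (norm_nonneg φ)
          simp only [map_add, map_sub] at h h' ⊢
          linarith }
    obtain ⟨g, hg1, hg2⟩ := riesz_extension s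
      ((LinearMap.snd ℝ E ℝ).toPMap (LinearMap.ker (LinearMap.fst ℝ E ℝ)))
      (by
        rintro ⟨⟨y, t⟩, hy⟩ ⟨a, b, ha, hb, h⟩
        have hy' : y = 0 := hy
        subst hy'
        change 0 ≤ t
        simp only [zero_add] at h
        have h1 : φ (a - b) ≤ ‖φ‖ * ‖a - b‖ := (le_abs_self _).trans (φ.le_opNorm _)
        have h2 := mul_le_mul_of_nonneg_left (hle a b ha hb) (norm_nonneg φ)
        linarith)
      (by
        rintro ⟨y, t⟩
        refine ⟨⟨(0, ‖φ‖ * ‖y‖ - t), rfl⟩, 0, 0, le_rfl, le_rfl, ?_⟩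
        simp)
    have hg0 : ∀ t : ℝ, g (0, t) = t := fun t => hg1 ⟨(0, t), rfl⟩
    let ψ₀ : E →ₗ[ℝ] ℝ := -(g ∘ₗ LinearMap.inl ℝ E ℝ)
    have hψ₀ : ∀ y a b : E, 0 ≤ a → 0 ≤ b → ψ₀ y ≤ ‖φ‖ * ‖y + (a + b)‖ - φ (a - b) := by
      intro y a b ha hb
      have h := hg2 (y, ‖φ‖ * ‖y + (a + b)‖ - φ (a - b)) ⟨a, b, ha, hb, le_rfl⟩
      have e : ((y, ‖φ‖ * ‖y + (a + b)‖ - φ (a - b)) : E × ℝ) =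
        (y, 0) + (0, ‖φ‖ * ‖y + (a + b)‖ - φ (a - b)) := by simp
      rw [e, map_add, hg0] at h
      change -(g (y, 0)) ≤ _
      linarith
    have hb1 : ∀ y, ψ₀ y ≤ ‖φ‖ * ‖y‖ := fun y => by
      simpa using hψ₀ y 0 0 le_rfl le_rfl
    have hb2 : ∀ y, ‖ψ₀ y‖ ≤ ‖φ‖ * ‖y‖ := fun y => by
      rw [Real.norm_eq_abs, abs_le]
      have := hb1 (-y)
      rw [map_neg, norm_neg] at this
      exact ⟨by linarith, hb1 y⟩
    refine ⟨ψ₀.mkContinuous ‖φ‖ hb2, ?_, ?_,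
      LinearMap.mkContinuous_norm_le _ (norm_nonneg _) _⟩
    · intro x hx
      have := hψ₀ (-x) 0 x le_rfl hx
      simp at this
      simp
      linarith
    · intro x hx
      have := hψ₀ (-x) x 0 hx le_rfl
      simp at this
      simp
      linarith
  refine ⟨?_, ?_, ?_, ?_, ?_⟩
  · have : dualPosCone E = ⋂ x : E, ⋂ _ : 0 ≤ x, {φ : E →L[ℝ] ℝ | 0 ≤ φ x} := by
      ext φ
      simp [dualPosCone]
    rw [this]
    exact isClosed_iInter fun x => isClosed_iInter fun _ =>
      isClosed_le continuous_const (ContinuousLinearMap.apply ℝ ℝ x).continuous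
  · intro φ h1 h2
    have h0 : ∀ x : E, 0 ≤ x → φ x = 0 := fun x hx => by
      have a1 := h1 x hx
      have a2 := h2 x hx
      rw [ContinuousLinearMap.neg_apply] at a2
      linarith
    ext x
    obtain ⟨u, v, hu, hv, rfl⟩ := hgen x
    simp [h0 u hu, h0 v hv]
  · intro φ
    obtain ⟨ψ, h1, h2, -⟩ := hmain φ
    exact ⟨φ + ψ, ψ, h1, fun x hx => by
      have a1 := h1 x hx
      have a2 := h2 x hx
      simp only [ContinuousLinearMap.add_apply, ContinuousLinearMap.sub_apply] at a1 a2
      linarith, by simp⟩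
  · intro φ ψ h1 h2
    refine hdom φ ψ (fun x hx => ?_) h2
    have a1 := h1 x hx
    have a2 := h2 x hx
    simp only [ContinuousLinearMap.add_apply, ContinuousLinearMap.sub_apply] at a1 a2 ⊢
    linarith
  · intro φ
    obtain ⟨ψ, h1, h2, h3⟩ := hmain φ
    apply le_antisymm
    · refine le_csInf ⟨_, ψ, h1, h2, rfl⟩ ?_
      rintro r ⟨χ, k1, k2, rfl⟩
      exact hdom φ χ k1 k2
    · refine le_trans (csInf_le ?_ ?_) h3
      swap
      · exact ⟨ψ, h1, h2, rfl⟩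
      refine ⟨0, ?_⟩
      rintro r ⟨χ, -, -, rfl⟩
      exact norm_nonneg χ
end

section
/- Every separable ordered Banach space E contains a strictly positive element, that is, an element x ∈ E₊ such that φ(x) > 0 for every nonzero continuous linear functional φ ∈ E*₊. -/
/-- Every separable ordered Banach space contains a strictly positive element, i.e. an
element `x ≥ 0` with `φ x > 0` for every nonzero positive continuous linear functional `φ`. -/
theorem exists_strictly_positive_of_separable
    {E : Type*} [NormedAddCommGroup E] [NormedSpace ℝ E] [CompleteSpace E] [PartialOrder E]
    [TopologicalSpace.SeparableSpace E]
    (hadd : ∀ x y z : E, x ≤ y → x + z ≤ y + z)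
    (hsmul : ∀ (c : ℝ) (x y : E), 0 ≤ c → x ≤ y → c • x ≤ c • y)
    (hclosed : IsClosed {x : E | 0 ≤ x})
    (hgen : ∀ x : E, ∃ u v : E, 0 ≤ u ∧ 0 ≤ v ∧ x = u - v)
    (hnormmono : ∀ x y : E, 0 ≤ x → x ≤ y → ‖x‖ ≤ ‖y‖) :
    ∃ x : E, 0 ≤ x ∧ ∀ φ : E →L[ℝ] ℝ,
      (∀ z : E, 0 ≤ z → 0 ≤ φ z) → φ ≠ 0 → 0 < φ x := by
  have : Nonempty {x : E | 0 ≤ x} := ⟨⟨0, le_refl (0 : E)⟩⟩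
  obtain ⟨p, hp⟩ := TopologicalSpace.exists_dense_seq {x : E | 0 ≤ x}
  have hp0 : ∀ n, (0 : E) ≤ (p n : E) := fun n => (p n).2
  let c : ℕ → ℝ := fun n => (1 / 2 : ℝ) ^ n / (1 + ‖(p n : E)‖)
  have hc : ∀ n, 0 < c n := fun n => by positivity
  have hs : Summable (fun n => c n • (p n : E)) := by
    refine Summable.of_norm_bounded summable_geometric_two (fun n => ?_)
    rw [norm_smul, Real.norm_of_nonneg (hc n).le, div_mul_eq_mul_div, div_le_iff₀ (by positivity)]
    have h2 : (0 : ℝ) < (1 / 2) ^ n := by positivity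
    nlinarith [norm_nonneg (p n : E)]
  have hterm : ∀ n, (0 : E) ≤ c n • (p n : E) := fun n => by
    simpa using hsmul (c n) 0 (p n) (hc n).le (hp0 n)
  have hfin : ∀ s : Finset ℕ, (0 : E) ≤ ∑ n ∈ s, c n • (p n : E) := by
    intro s
    induction s using Finset.induction_on with
    | empty => simp
    | insert a s ha ih =>
      rw [Finset.sum_insert ha]
      refine ih.trans ?_
      simpa using hadd _ _ (∑ n ∈ s, c n • (p n : E)) (hterm a)
  refine ⟨∑' n, c n • (p n : E), ?_, ?_⟩
  · exact hclosed.mem_of_tendsto hs.hasSum (Filter.Eventually.of_forall hfin)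
  · intro φ hφ hne
    have hsum : HasSum (fun n => φ (c n • (p n : E))) (φ (∑' n, c n • (p n : E))) :=
      φ.hasSum hs.hasSum
    have hnn : ∀ n, 0 ≤ φ (c n • (p n : E)) := fun n => hφ _ (hterm n)
    have hex : ∃ n, φ (p n : E) ≠ 0 := by
      by_contra! hall
      apply hne
      have hzero : (fun z : {x : E | 0 ≤ x} => φ (z : E)) = fun _ => 0 := by
        refine hp.equalizer (by fun_prop) (by fun_prop) ?_
        funext n
        exact hall n
      have hz : ∀ z : E, 0 ≤ z → φ z = 0 := fun z hz => congrFun hzero ⟨z, hz⟩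
      ext x
      obtain ⟨u, v, hu, hv, rfl⟩ := hgen x
      simp [hz u hu, hz v hv]
    obtain ⟨n, hn⟩ := hex
    have hlt : 0 < φ (c n • (p n : E)) := by
      rw [map_smul, smul_eq_mul]
      exact mul_pos (hc n) (lt_of_le_of_ne (hφ _ (hp0 n)) hn.symm)
    exact hlt.trans_le (le_hasSum hsum n (fun m _ => hnn m))
end

section
/- Let K be a compact subset of ℝ^N, X a compact Hausdorff space, and T, A : C(K) → C(X) weakly nonlinear and monotone operators. Fix α ≥ α(K,u), and set p = Σ_{k=1}^N (pr_k + α)² ∈ C(K) and q_k = −pr_k − α ∈ C(K) for k = 1,…,N. Then for every f ∈ C(K) and every ε > 0 there exists δ > 0 such that, pointwise on X, |T(f)·A(1) − T(1)·A(f)| ≤ ε·T(1)·A(1) + δ·{ A(1)·[T(p) − A(p)] + A(p)·[T(1) − A(1)] + 2·[A(1)·A(p) − Σ_{k=1}^N (A(q_k))²] + 2·Σ_{k=1}^N A(q_k)·[A(q_k) − T(q_k)] }. -/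
/-- The restriction to `K ⊆ ℝ^N` of the `k`-th coordinate projection, as a continuous map. -/
noncomputable def coordCM {N : ℕ} (K : Set (EuclideanSpace ℝ (Fin N))) (k : Fin N) : C(K, ℝ) :=
  ⟨fun x => (x : EuclideanSpace ℝ (Fin N)) k,
    (EuclideanSpace.proj k).continuous.comp continuous_subtype_val⟩

/-- The deficit of positivity `α(K, u)` of `K ⊆ ℝ^N` in the direction `u = (1, …, 1)`:
the infimum of all `α ≥ 0` with `K + αu ⊆ ℝ₊^N`. -/
noncomputable def posDeficit {N : ℕ} (K : Set (EuclideanSpace ℝ (Fin N))) : ℝ :=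
  sInf {a : ℝ | 0 ≤ a ∧ ∀ x ∈ K, ∀ k : Fin N, 0 ≤ x k + a}

/-- `p = Σ_{k=1}^N (pr_k + α)²` as an element of `C(K)`. -/
noncomputable def testP {N : ℕ} (K : Set (EuclideanSpace ℝ (Fin N))) (α : ℝ) : C(K, ℝ) :=
  ∑ k : Fin N, (coordCM K k + ContinuousMap.const K α) ^ 2

/-- `q_k = −pr_k − α` as an element of `C(K)`. -/
noncomputable def testQ {N : ℕ} (K : Set (EuclideanSpace ℝ (Fin N))) (α : ℝ) (k : Fin N) :
    C(K, ℝ) :=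
  -(coordCM K k) - ContinuousMap.const K α

theorem aux_le {N : ℕ} {K : Type*} [TopologicalSpace K]
    (L : C(K, ℝ) → ℝ)
    (hsub : ∀ f g : C(K, ℝ), L (f + g) ≤ L f + L g)
    (hpos : ∀ (a : ℝ), 0 ≤ a → ∀ f : C(K, ℝ), L (a • f) = a * L f)
    (htr : ∀ f : C(K, ℝ), ∀ a : ℝ, 0 ≤ a → L (f + a • 1) = L f + a * L 1)
    (hmono : ∀ f g : C(K, ℝ), f ≤ g → L f ≤ L g)
    (p : C(K, ℝ)) (q : Fin N → C(K, ℝ)) (g h : C(K, ℝ)) (c d b s : ℝ) (w : Fin N → ℝ)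
    (hc : 0 ≤ c) (hd : 0 ≤ d) (hs : 0 ≤ s) (hw : ∀ k, 0 ≤ w k)
    (H : ∀ x, c * g x ≤ d * h x + b + s * p x + ∑ k, w k * q k x) :
    c * L g ≤ d * L h + b * L 1 + s * L p + ∑ k, w k * L (q k) := by
  have h0 : L 0 = 0 := by simpa using hpos 0 le_rfl 0
  have htr' : ∀ f : C(K, ℝ), ∀ a : ℝ, L (f + a • 1) = L f + a * L 1 := by
    intro f a
    rcases le_total 0 a with ha | ha
    · exact htr f a ha
    · have := htr (f + a • 1) (-a) (by linarith)
      rw [add_assoc, ← add_smul, add_neg_cancel, zero_smul, add_zero] at this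
      linarith
  have hsum : ∀ S : Finset (Fin N), L (∑ k ∈ S, w k • q k) ≤ ∑ k ∈ S, w k * L (q k) := by
    intro S
    induction S using Finset.induction_on with
    | empty => simp [h0]
    | insert a S ha ih =>
      rw [Finset.sum_insert ha, Finset.sum_insert ha, ← hpos _ (hw a)]
      linarith [hsub (w a • q a) (∑ k ∈ S, w k • q k)]
  have h1 : L (c • g) ≤ L ((d • h + (s • p + ∑ k, w k • q k)) + b • 1) := by
    apply hmono
    rw [ContinuousMap.le_def]
    intro x
    have := H x
    simp only [ContinuousMap.add_apply, ContinuousMap.smul_apply, smul_eq_mul,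
      ContinuousMap.sum_apply, ContinuousMap.one_apply, mul_one]
    linarith
  rw [htr', hpos c hc] at h1
  have h2 := hsub (d • h) (s • p + ∑ k, w k • q k)
  have h3 := hsub (s • p) (∑ k, w k • q k)
  rw [hpos d hd] at h2
  rw [hpos s hs] at h3
  linarith [hsum Finset.univ]

theorem aux_modulus {K : Type*} [MetricSpace K] [CompactSpace K] (f : C(K, ℝ)) {ε : ℝ}
    (hε : 0 < ε) : ∃ δ : ℝ, 0 < δ ∧ ∀ x y, f x - f y ≤ ε + δ * dist x y ^ 2 := by
  obtain ⟨η, hη, hf⟩ := Metric.uniformContinuous_iff.1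
    (CompactSpace.uniformContinuous_of_continuous f.continuous) ε hε
  refine ⟨(2 * ‖f‖ + 1) / η ^ 2, by positivity, fun x y => ?_⟩
  rcases lt_or_ge (dist x y) η with h | h
  · have := hf h
    rw [Real.dist_eq] at this
    have h2 : 0 ≤ (2 * ‖f‖ + 1) / η ^ 2 * dist x y ^ 2 := by positivity
    linarith [le_abs_self (f x - f y)]
  · have h1 := f.norm_coe_le_norm x
    have h2 := f.norm_coe_le_norm y
    rw [Real.norm_eq_abs] at h1 h2
    have h3 : 2 * ‖f‖ + 1 ≤ (2 * ‖f‖ + 1) / η ^ 2 * dist x y ^ 2 := by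
      rw [div_mul_eq_mul_div, le_div_iff₀ (by positivity)]
      gcongr
    linarith [abs_le.1 h1, abs_le.1 h2]

theorem aux_nonneg {N : ℕ} (K : Set (EuclideanSpace ℝ (Fin N))) [CompactSpace K]
    (α : ℝ) (hα : posDeficit K ≤ α) (x : K) (k : Fin N) :
    0 ≤ (x : EuclideanSpace ℝ (Fin N)) k + α := by
  have hK : IsCompact K := isCompact_iff_compactSpace.2 inferInstance
  obtain ⟨R, hR⟩ := hK.isBounded.exists_norm_le
  have : -(x : EuclideanSpace ℝ (Fin N)) k ≤ posDeficit K := by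
    apply le_csInf
    · refine ⟨max R 0, le_max_right _ _, fun y hy j => ?_⟩
      have h1 := PiLp.norm_apply_le y j
      rw [Real.norm_eq_abs] at h1
      linarith [hR y hy, le_max_left R 0, neg_abs_le (y j)]
    · rintro a ⟨-, ha⟩
      linarith [ha x x.2 k]
  linarith

/-- **The a priori estimate (Lemma 3), pointwise form.** For weakly nonlinear and monotone
operators `T, A : C(K) → C(X)` and `α ≥ α(K,u)`, every `f ∈ C(K)` and `ε > 0` admit a
`δ > 0` such that the displayed pointwise inequality holds on `X`. -/
theorem pointwise_a_priori_estimate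
    {N : ℕ} (K : Set (EuclideanSpace ℝ (Fin N))) [CompactSpace K]
    {X : Type*} [TopologicalSpace X] [CompactSpace X] [T2Space X]
    (T A : C(K, ℝ) → C(X, ℝ))
    (hTsub : ∀ f g : C(K, ℝ), T (f + g) ≤ T f + T g)
    (hTpos : ∀ (a : ℝ), 0 ≤ a → ∀ f : C(K, ℝ), T (a • f) = a • T f)
    (hTtr : ∀ f : C(K, ℝ), ∀ a : ℝ, 0 ≤ a → T (f + a • 1) = T f + a • T 1)
    (hTmono : Monotone T)
    (hAsub : ∀ f g : C(K, ℝ), A (f + g) ≤ A f + A g)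
    (hApos : ∀ (a : ℝ), 0 ≤ a → ∀ f : C(K, ℝ), A (a • f) = a • A f)
    (hAtr : ∀ f : C(K, ℝ), ∀ a : ℝ, 0 ≤ a → A (f + a • 1) = A f + a • A 1)
    (hAmono : Monotone A)
    (α : ℝ) (hα : posDeficit K ≤ α)
    (f : C(K, ℝ)) {ε : ℝ} (hε : 0 < ε) :
    ∃ δ : ℝ, 0 < δ ∧ ∀ t : X,
      |T f t * A 1 t - T 1 t * A f t| ≤
        ε * (T 1 t * A 1 t) +
        δ * (A 1 t * (T (testP K α) t - A (testP K α) t) +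
             A (testP K α) t * (T 1 t - A 1 t) +
             2 * (A 1 t * A (testP K α) t - ∑ k : Fin N, (A (testQ K α k) t) ^ 2) +
             2 * ∑ k : Fin N, A (testQ K α k) t * (A (testQ K α k) t - T (testQ K α k) t)) := by
  obtain ⟨δ, hδ, hf⟩ := aux_modulus f hε
  have hnn := aux_nonneg K α hα
  have hq : ∀ (k : Fin N) (x : K), testQ K α k x = -((x : EuclideanSpace ℝ (Fin N)) k + α) := by
    intro k x
    have : coordCM K k x = (x : EuclideanSpace ℝ (Fin N)) k := rfl
    simp [testQ, this]
    ring
  have hp : ∀ x : K, testP K α x = ∑ k, ((x : EuclideanSpace ℝ (Fin N)) k + α) ^ 2 := by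
    intro x
    have : ∀ k, coordCM K k x = (x : EuclideanSpace ℝ (Fin N)) k := fun k => rfl
    simp [testP, this]
  have hdist : ∀ x y : K, dist x y ^ 2 = testP K α x + testP K α y
      + ∑ k, (2 * ((y : EuclideanSpace ℝ (Fin N)) k + α)) * testQ K α k x := by
    intro x y
    rw [Subtype.dist_eq, EuclideanSpace.dist_eq, Real.sq_sqrt (by positivity), hp, hp,
      ← Finset.sum_add_distrib, ← Finset.sum_add_distrib]
    refine Finset.sum_congr rfl fun k _ => ?_
    rw [hq, Real.dist_eq, sq_abs]
    ring
  refine ⟨δ, hδ, fun t => ?_⟩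
  have hTle := aux_le (N := N) (fun g => T g t) (fun f g => hTsub f g t)
    (fun a ha f => by simp [hTpos a ha f]) (fun f a ha => by simp [hTtr f a ha])
    (fun f g h => hTmono h t) (testP K α) (testQ K α)
  have hAle := aux_le (N := N) (fun g => A g t) (fun f g => hAsub f g t)
    (fun a ha f => by simp [hApos a ha f]) (fun f a ha => by simp [hAtr f a ha])
    (fun f g h => hAmono h t) (testP K α) (testQ K α)
  have hT0 : T 0 t = 0 := by
    have := hTpos 0 le_rfl 0
    simp only [zero_smul] at this
    rw [this]; rfl
  have hT1 : 0 ≤ T 1 t := by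
    rw [← hT0]
    exact hTmono (fun x => by simp) t
  have hTq : ∀ k, T (testQ K α k) t ≤ 0 := by
    intro k
    rw [← hT0]
    exact hTmono (ContinuousMap.le_def.2 fun x => by
      rw [hq, ContinuousMap.zero_apply]; linarith [hnn x k]) t
  have e1 : ∀ y : K, ∑ k, (δ * (2 * ((y : EuclideanSpace ℝ (Fin N)) k + α))) * T (testQ K α k) t
      = ∑ k, (δ * 2 * (-T (testQ K α k) t)) * testQ K α k y := by
    intro y
    refine Finset.sum_congr rfl fun k _ => ?_
    rw [hq]; ring
  have e2 : ∀ x y : K, ∑ k, (δ * (2 * ((y : EuclideanSpace ℝ (Fin N)) k + α))) * testQ K α k x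
      = δ * ∑ k, (2 * ((y : EuclideanSpace ℝ (Fin N)) k + α)) * testQ K α k x := by
    intro x y
    rw [Finset.mul_sum]
    refine Finset.sum_congr rfl fun k _ => ?_
    ring
  have hw : ∀ (y : K) (k : Fin N), 0 ≤ δ * (2 * ((y : EuclideanSpace ℝ (Fin N)) k + α)) :=
    fun y k => mul_nonneg hδ.le (mul_nonneg zero_le_two (hnn y k))
  have hw' : ∀ k : Fin N, 0 ≤ δ * 2 * (-T (testQ K α k) t) :=
    fun k => mul_nonneg (by positivity) (by linarith [hTq k])
  have t1 : ∀ y : K, T f t ≤ f y * T 1 t + ε * T 1 t + δ * T (testP K α) t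
      + δ * T 1 t * testP K α y + ∑ k, (δ * 2 * (-T (testQ K α k) t)) * testQ K α k y := by
    intro y
    have := hTle f 0 1 0 (f y + ε + δ * testP K α y) δ _ zero_le_one le_rfl hδ.le (hw y) (by
      intro x
      have h := hf x y
      rw [hdist] at h
      rw [e2]
      linarith)
    simp only [e1] at this
    linarith
  have t2 : ∀ y : K, f y * T 1 t ≤ T f t + ε * T 1 t + δ * T (testP K α) t
      + δ * T 1 t * testP K α y + ∑ k, (δ * 2 * (-T (testQ K α k) t)) * testQ K α k y := by
    intro y
    have := hTle 0 f 0 1 (-f y + ε + δ * testP K α y) δ _ le_rfl zero_le_one hδ.le (hw y) (by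
      intro x
      have h := hf y x
      rw [dist_comm, hdist] at h
      rw [e2]
      linarith)
    simp only [e1] at this
    linarith
  have a1 := hAle 0 f 0 (T 1 t) (-T f t + ε * T 1 t + δ * T (testP K α) t) (δ * T 1 t) _
    le_rfl hT1 (mul_nonneg hδ.le hT1) hw' (fun y => by linarith [t1 y])
  have a2 := hAle f 0 (T 1 t) 0 (T f t + ε * T 1 t + δ * T (testP K α) t) (δ * T 1 t) _
    hT1 le_rfl (mul_nonneg hδ.le hT1) hw' (fun y => by linarith [t2 y])
  have e3 : ∑ k, (δ * 2 * (-T (testQ K α k) t)) * A (testQ K α k) t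
      = δ * (2 * (∑ k, A (testQ K α k) t * (A (testQ K α k) t - T (testQ K α k) t)
        - ∑ k, (A (testQ K α k) t) ^ 2)) := by
    rw [← Finset.sum_sub_distrib, Finset.mul_sum, Finset.mul_sum]
    refine Finset.sum_congr rfl fun k _ => ?_
    ring
  simp only [e3] at a1 a2
  rw [abs_le]
  constructor
  · linarith
  · linarith
end

section
/- Let K be a compact subset of ℝ^N, X a compact Hausdorff space, and let T_n (n ∈ ℕ) and A be weakly nonlinear and monotone operators from C(K) into C(X). Assume (i) A(1)(t) > 0 for every t ∈ X, and (ii) for some α ≥ α(K,u), A(1)·A(p) = Σ_{k=1}^N (A(q_k))², where p = Σ_{k=1}^N (pr_k + α)² and q_k = −pr_k − α. Then lim_{n→∞} ‖T_n(f) − A(f)‖ = 0 for every f ∈ C(K) if and only if lim_{n→∞} ‖T_n(f) − A(f)‖ = 0 for each of the N+2 test functions 1, q_1, …, q_N and p (sup-norm on C(X)). -/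
open Filter

section helpers

variable {N : ℕ} {K : Set (EuclideanSpace ℝ (Fin N))}

noncomputable def phiFn (K : Set (EuclideanSpace ℝ (Fin N))) (α : ℝ) (c : Fin N → ℝ) : C(K, ℝ) :=
  testP K α + ∑ k, (2 * c k) • testQ K α k + (∑ k, c k ^ 2) • (1 : C(K, ℝ))

lemma coordCM_apply' (k : Fin N) (x : K) :
    coordCM K k x = (x : EuclideanSpace ℝ (Fin N)) k := rfl

lemma phiFn_apply (α : ℝ) (c : Fin N → ℝ) (x : K) :
    phiFn K α c x = ∑ k, ((x : EuclideanSpace ℝ (Fin N)) k + α - c k) ^ 2 := by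
  simp only [phiFn, testP, testQ, coordCM_apply', ContinuousMap.add_apply, ContinuousMap.sum_apply,
    ContinuousMap.smul_apply, ContinuousMap.one_apply, ContinuousMap.pow_apply,
    ContinuousMap.sub_apply, ContinuousMap.neg_apply, ContinuousMap.const_apply,
    smul_eq_mul, mul_one]
  rw [← Finset.sum_add_distrib, ← Finset.sum_add_distrib]
  exact Finset.sum_congr rfl fun k _ => by ring

lemma L_sum_le (L : C(K, ℝ) → ℝ) (h0 : L 0 = 0) (hsub : ∀ f g, L (f + g) ≤ L f + L g)
    (g : Fin N → C(K, ℝ)) (s : Finset (Fin N)) : L (∑ k ∈ s, g k) ≤ ∑ k ∈ s, L (g k) := by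
  classical
  induction s using Finset.induction_on with
  | empty => simp [h0]
  | insert a s ha ih =>
    rw [Finset.sum_insert ha, Finset.sum_insert ha]
    exact (hsub _ _).trans (by linarith)

lemma L_phi_le (L : C(K, ℝ) → ℝ) (hsub : ∀ f g, L (f + g) ≤ L f + L g)
    (hpos : ∀ a : ℝ, 0 ≤ a → ∀ f, L (a • f) = a * L f)
    (α : ℝ) (c : Fin N → ℝ) (hc : ∀ k, 0 ≤ c k) :
    L (phiFn K α c) ≤ L (testP K α) + ∑ k, 2 * c k * L (testQ K α k) + (∑ k, c k ^ 2) * L 1 := by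
  have h0 : L 0 = 0 := by simpa using hpos 0 le_rfl 0
  have h1 := hsub (testP K α + ∑ k, (2 * c k) • testQ K α k) ((∑ k, c k ^ 2) • (1 : C(K, ℝ)))
  have h2 := hsub (testP K α) (∑ k, (2 * c k) • testQ K α k)
  have h3 := L_sum_le L h0 hsub (fun k => (2 * c k) • testQ K α k) Finset.univ
  rw [hpos _ (Finset.sum_nonneg fun k _ => sq_nonneg _)] at h1
  have h4 : ∑ k, L ((2 * c k) • testQ K α k) = ∑ k, 2 * c k * L (testQ K α k) :=
    Finset.sum_congr rfl fun k _ => hpos _ (by linarith [hc k]) _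
  rw [phiFn]
  linarith

lemma L_const (L : C(K, ℝ) → ℝ) (hpos : ∀ a : ℝ, 0 ≤ a → ∀ f, L (a • f) = a * L f)
    (htr : ∀ f, ∀ a : ℝ, 0 ≤ a → L (f + a • 1) = L f + a * L 1) (c : ℝ) :
    L (c • 1) = c * L 1 := by
  have h0 : L 0 = 0 := by simpa using hpos 0 le_rfl 0
  rcases le_total 0 c with h | h
  · exact hpos c h 1
  · have := htr (c • 1) (-c) (by linarith)
    rw [← add_smul, add_neg_cancel, zero_smul, h0] at this
    linarith

lemma L_est (L : C(K, ℝ) → ℝ) (hsub : ∀ f g, L (f + g) ≤ L f + L g)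
    (hpos : ∀ a : ℝ, 0 ≤ a → ∀ f, L (a • f) = a * L f)
    (htr : ∀ f, ∀ a : ℝ, 0 ≤ a → L (f + a • 1) = L f + a * L 1)
    (hmono : Monotone L)
    (α : ℝ) (c : Fin N → ℝ) (hc : ∀ k, 0 ≤ c k) (f : C(K, ℝ)) (v ε C : ℝ) (hC : 0 ≤ C)
    (hf : ∀ x : K, |f x - v| ≤ ε + C * phiFn K α c x) :
    |L f - v * L 1| ≤ ε * L 1 + C * (L (testP K α) + ∑ k, 2 * c k * L (testQ K α k)
      + (∑ k, c k ^ 2) * L 1) := by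
  have hphi := mul_le_mul_of_nonneg_left (L_phi_le L hsub hpos α c hc) hC
  have h1 : f ≤ (v + ε) • (1 : C(K, ℝ)) + C • phiFn K α c := by
    intro x
    have := (abs_le.1 (hf x)).2
    simp
    linarith
  have h2 : (v - ε) • (1 : C(K, ℝ)) ≤ f + C • phiFn K α c := by
    intro x
    have := (abs_le.1 (hf x)).1
    simp
    linarith
  have h3 := (hmono h1).trans (hsub _ _)
  have h4 := (hmono h2).trans (hsub _ _)
  rw [L_const L hpos htr, hpos C hC] at h3
  rw [L_const L hpos htr, hpos C hC] at h4
  rw [abs_le]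
  constructor <;> linarith

lemma exists_pt [CompactSpace K] (L : C(K, ℝ) → ℝ) (hsub : ∀ f g, L (f + g) ≤ L f + L g)
    (hpos : ∀ a : ℝ, 0 ≤ a → ∀ f, L (a • f) = a * L f)
    (hmono : Monotone L) (h1 : 0 < L 1)
    (α : ℝ) (hq : ∀ k, L (testQ K α k) ≤ 0)
    (hfe : L 1 * L (testP K α) = ∑ k, L (testQ K α k) ^ 2) :
    ∃ y : K, ∀ k, ((y : EuclideanSpace ℝ (Fin N)) k + α) * L 1 = - L (testQ K α k) := by
  set c : Fin N → ℝ := fun k => - L (testQ K α k) / L 1 with hcdef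
  have hcL : ∀ k, c k * L 1 = - L (testQ K α k) := fun k => by
    simp only [hcdef]; field_simp
  have hc : ∀ k, 0 ≤ c k := fun k => div_nonneg (by linarith [hq k]) h1.le
  have hphi := L_phi_le L hsub hpos α c hc
  have hz : L (testP K α) + ∑ k, 2 * c k * L (testQ K α k) + (∑ k, c k ^ 2) * L 1 = 0 := by
    have hP : L (testP K α) = ∑ k, c k ^ 2 * L 1 := by
      apply mul_left_cancel₀ h1.ne'
      rw [hfe, Finset.mul_sum]
      refine Finset.sum_congr rfl fun k _ => ?_
      have := hcL k
      rw [show L (testQ K α k) = -(c k * L 1) by linarith]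
      ring
    rw [hP, Finset.sum_mul, ← Finset.sum_add_distrib, ← Finset.sum_add_distrib]
    refine Finset.sum_eq_zero fun k _ => ?_
    rw [show L (testQ K α k) = -(c k * L 1) by linarith [hcL k]]
    ring
  rw [hz] at hphi
  by_contra hno
  push Not at hno
  have hp : ∀ x : K, 0 < phiFn K α c x := by
    intro x
    rw [phiFn_apply]
    obtain ⟨k, hk⟩ := hno x
    refine Finset.sum_pos' (fun _ _ => sq_nonneg _) ⟨k, Finset.mem_univ _, ?_⟩
    refine sq_pos_of_ne_zero fun h => hk ?_
    rw [← hcL k, sub_eq_zero.1 h]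
  obtain ⟨d, hd, hdle⟩ : ∃ d : ℝ, 0 < d ∧ ∀ x : K, d ≤ phiFn K α c x := by
    rcases isEmpty_or_nonempty K with hE | hE
    · exact ⟨1, one_pos, fun x => (hE.false x).elim⟩
    · obtain ⟨x, -, hx⟩ := isCompact_univ.exists_isMinOn Set.univ_nonempty
        (phiFn K α c).continuous.continuousOn
      exact ⟨_, hp x, fun z => hx (Set.mem_univ z)⟩
  have hle : d • (1 : C(K, ℝ)) ≤ phiFn K α c := by
    intro x
    simpa using hdle x
  have := hmono hle
  rw [hpos d hd.le] at this
  nlinarith [mul_pos hd h1]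

lemma nonneg_of_deficit [CompactSpace K] (α : ℝ) (hα : posDeficit K ≤ α) (x : K) (k : Fin N) :
    0 ≤ (x : EuclideanSpace ℝ (Fin N)) k + α := by
  set S := {a : ℝ | 0 ≤ a ∧ ∀ x ∈ K, ∀ k : Fin N, 0 ≤ x k + a} with hS
  have hne : S.Nonempty := by
    have hb : ∀ k : Fin N, ∀ x : K, |(x : EuclideanSpace ℝ (Fin N)) k| ≤ ‖coordCM K k‖ :=
      fun k x => (coordCM K k).norm_coe_le_norm x
    refine ⟨∑ k, ‖coordCM K k‖, Finset.sum_nonneg fun _ _ => norm_nonneg _, fun x hx k => ?_⟩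
    have h1 := (abs_le.1 (hb k ⟨x, hx⟩)).1
    have h2 := Finset.single_le_sum (f := fun k => ‖coordCM K k‖)
      (fun _ _ => norm_nonneg _) (Finset.mem_univ k)
    simp only at h1 h2
    linarith
  have : -(x : EuclideanSpace ℝ (Fin N)) k ≤ posDeficit K :=
    le_csInf hne fun a ha => by linarith [ha.2 x x.2 k]
  linarith

lemma exists_C [CompactSpace K] (α : ℝ) (f : C(K, ℝ)) (ε : ℝ) (hε : 0 < ε) :
    ∃ C : ℝ, 0 ≤ C ∧ ∀ x y : K,
      |f x - f y| ≤ ε + C * phiFn K α (fun k => (y : EuclideanSpace ℝ (Fin N)) k + α) x := by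
  have huc := CompactSpace.uniformContinuous_of_continuous f.continuous
  obtain ⟨δ, hδ, h⟩ := Metric.uniformContinuous_iff.1 huc ε hε
  refine ⟨2 * ‖f‖ / δ ^ 2, by positivity, fun x y => ?_⟩
  have hphi : phiFn K α (fun k => (y : EuclideanSpace ℝ (Fin N)) k + α) x = dist x y ^ 2 := by
    rw [phiFn_apply, Subtype.dist_eq, EuclideanSpace.dist_eq, Real.sq_sqrt
      (Finset.sum_nonneg fun _ _ => sq_nonneg _)]
    refine Finset.sum_congr rfl fun k _ => ?_
    rw [Real.dist_eq, sq_abs]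
    ring
  rw [hphi]
  by_cases hxy : dist x y < δ
  · have := h hxy
    rw [Real.dist_eq] at this
    have : 0 ≤ 2 * ‖f‖ / δ ^ 2 * dist x y ^ 2 := by positivity
    linarith
  · push Not at hxy
    have h1 : |f x - f y| ≤ 2 * ‖f‖ := by
      have a := f.norm_coe_le_norm x
      have b := f.norm_coe_le_norm y
      have := norm_sub_le (f x) (f y)
      rw [Real.norm_eq_abs] at this
      linarith
    have h2 : 2 * ‖f‖ ≤ 2 * ‖f‖ / δ ^ 2 * dist x y ^ 2 := by
      rw [div_mul_eq_mul_div, le_div_iff₀ (by positivity)]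
      gcongr
    linarith

end helpers

/-- **Korovkin-type theorem for weakly nonlinear monotone operators (Theorem 3).**
If `T_n, A : C(K) → C(X)` are weakly nonlinear and monotone, `A(1)` is strictly positive and
`A(1)·A(p) = Σ_k (A(q_k))²` for some `α ≥ α(K,u)`, then `‖T_n f − A f‖ → 0` for all
`f ∈ C(K)` iff it holds for the `N + 2` test functions `1, q_1, …, q_N, p`. -/
theorem korovkin_weakly_nonlinear
    {N : ℕ} (K : Set (EuclideanSpace ℝ (Fin N))) [CompactSpace K]
    {X : Type*} [TopologicalSpace X] [CompactSpace X] [T2Space X]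
    (T : ℕ → C(K, ℝ) → C(X, ℝ)) (A : C(K, ℝ) → C(X, ℝ))
    (hTsub : ∀ n, ∀ f g : C(K, ℝ), T n (f + g) ≤ T n f + T n g)
    (hTpos : ∀ n, ∀ (a : ℝ), 0 ≤ a → ∀ f : C(K, ℝ), T n (a • f) = a • T n f)
    (hTtr : ∀ n, ∀ f : C(K, ℝ), ∀ a : ℝ, 0 ≤ a → T n (f + a • 1) = T n f + a • T n 1)
    (hTmono : ∀ n, Monotone (T n))
    (hAsub : ∀ f g : C(K, ℝ), A (f + g) ≤ A f + A g)
    (hApos : ∀ (a : ℝ), 0 ≤ a → ∀ f : C(K, ℝ), A (a • f) = a • A f)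
    (hAtr : ∀ f : C(K, ℝ), ∀ a : ℝ, 0 ≤ a → A (f + a • 1) = A f + a • A 1)
    (hAmono : Monotone A)
    (hA1pos : ∀ t : X, 0 < A 1 t)
    (α : ℝ) (hα : posDeficit K ≤ α)
    (hAfe : A 1 * A (testP K α) = ∑ k : Fin N, (A (testQ K α k)) ^ 2) :
    (∀ f : C(K, ℝ), Tendsto (fun n => ‖T n f - A f‖) atTop (nhds 0)) ↔
      (Tendsto (fun n => ‖T n 1 - A 1‖) atTop (nhds 0) ∧
       (∀ k : Fin N, Tendsto (fun n => ‖T n (testQ K α k) - A (testQ K α k)‖) atTop (nhds 0)) ∧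
       Tendsto (fun n => ‖T n (testP K α) - A (testP K α)‖) atTop (nhds 0)) := by
  constructor
  · intro h
    exact ⟨h _, fun k => h _, h _⟩
  rintro ⟨hT1, hTq, hTp⟩ f
  have hqle : ∀ k, testQ K α k ≤ 0 := by
    intro k x
    have := nonneg_of_deficit α hα x k
    simp [testQ, coordCM_apply']
    linarith
  have hA0 : A 0 = 0 := by simpa using hApos 0 le_rfl 0
  -- the uniform estimate
  have key : ∀ ε : ℝ, 0 < ε → ∃ C : ℝ, 0 ≤ C ∧ ∀ n, ‖T n f - A f‖ ≤
      ε * (‖T n 1 - A 1‖ + 2 * ‖A 1‖) + ‖f‖ * ‖T n 1 - A 1‖ +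
      C * (‖T n (testP K α) - A (testP K α)‖ +
        ∑ k, 2 * ‖testQ K α k‖ * ‖T n (testQ K α k) - A (testQ K α k)‖ +
        (∑ k, ‖testQ K α k‖ ^ 2) * ‖T n 1 - A 1‖) := by
    intro ε hε
    obtain ⟨C, hC, hfC⟩ := exists_C (K := K) α f ε hε
    refine ⟨C, hC, fun n => ?_⟩
    rw [ContinuousMap.norm_le _ (by positivity)]
    intro t
    have hdiff : ∀ g, |T n g t - A g t| ≤ ‖T n g - A g‖ :=
      fun g => (T n g - A g).norm_coe_le_norm t
    have hfet : A 1 t * A (testP K α) t = ∑ k, A (testQ K α k) t ^ 2 := by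
      have := congrArg (fun g : C(X, ℝ) => g t) hAfe
      simpa using this
    obtain ⟨y, hy⟩ := exists_pt (fun g => A g t) (fun f g => hAsub f g t)
      (fun a ha f => by simp [hApos a ha f]) (fun f g h => hAmono h t) (hA1pos t) α
      (fun k => by simpa [hA0] using hAmono (hqle k) t) hfet
    simp only at hy
    set c : Fin N → ℝ := fun k => (y : EuclideanSpace ℝ (Fin N)) k + α with hc
    have hc0 : ∀ k, 0 ≤ c k := fun k => nonneg_of_deficit α hα y k
    have hcq : ∀ k, c k ≤ ‖testQ K α k‖ := fun k => by
      have h1 := (abs_le.1 ((testQ K α k).norm_coe_le_norm y)).1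
      have h2 : testQ K α k y = - c k := by simp [testQ, coordCM_apply', hc]; ring
      linarith
    have hTe := L_est (fun g => T n g t) (fun f g => hTsub n f g t)
      (fun a ha f => by simp [hTpos n a ha f]) (fun f a ha => by simp [hTtr n f a ha])
      (fun f g h => hTmono n h t) α c hc0 f (f y) ε C hC (fun x => hfC x y)
    have hAe := L_est (fun g => A g t) (fun f g => hAsub f g t)
      (fun a ha f => by simp [hApos a ha f]) (fun f a ha => by simp [hAtr f a ha])
      (fun f g h => hAmono h t) α c hc0 f (f y) ε C hC (fun x => hfC x y)
    have hz : A (testP K α) t + ∑ k, 2 * c k * A (testQ K α k) t + (∑ k, c k ^ 2) * A 1 t = 0 := by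
      have hP : A (testP K α) t = ∑ k, c k ^ 2 * A 1 t := by
        apply mul_left_cancel₀ (hA1pos t).ne'
        rw [hfet, Finset.mul_sum]
        refine Finset.sum_congr rfl fun k _ => ?_
        rw [show A (testQ K α k) t = -(c k * A 1 t) by linarith [hy k]]
        ring
      rw [hP, Finset.sum_mul, ← Finset.sum_add_distrib, ← Finset.sum_add_distrib]
      refine Finset.sum_eq_zero fun k _ => ?_
      rw [show A (testQ K α k) t = -(c k * A 1 t) by linarith [hy k]]
      ring
    have hd1 := abs_le.1 (hdiff 1)
    have hA1 : A 1 t ≤ ‖A 1‖ := (le_abs_self _).trans ((A 1).norm_coe_le_norm t)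
    have hE : T n (testP K α) t + ∑ k, 2 * c k * T n (testQ K α k) t + (∑ k, c k ^ 2) * T n 1 t ≤
        ‖T n (testP K α) - A (testP K α)‖ +
        ∑ k, 2 * ‖testQ K α k‖ * ‖T n (testQ K α k) - A (testQ K α k)‖ +
        (∑ k, ‖testQ K α k‖ ^ 2) * ‖T n 1 - A 1‖ := by
      have e1 := (abs_le.1 (hdiff (testP K α))).2
      have e2 : ∑ k, 2 * c k * T n (testQ K α k) t - ∑ k, 2 * c k * A (testQ K α k) t ≤
          ∑ k, 2 * ‖testQ K α k‖ * ‖T n (testQ K α k) - A (testQ K α k)‖ := by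
        rw [← Finset.sum_sub_distrib]
        refine Finset.sum_le_sum fun k _ => ?_
        rw [← mul_sub]
        have e3 := (abs_le.1 (hdiff (testQ K α k))).2
        have := hc0 k
        have := hcq k
        exact (mul_le_mul_of_nonneg_left e3 (by positivity)).trans (by gcongr)
      have e4 : (∑ k, c k ^ 2) * T n 1 t - (∑ k, c k ^ 2) * A 1 t ≤
          (∑ k, ‖testQ K α k‖ ^ 2) * ‖T n 1 - A 1‖ := by
        rw [← mul_sub]
        refine (mul_le_mul_of_nonneg_left hd1.2 (by positivity)).trans ?_
        gcongr with k
        · exact hc0 k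
        · exact hcq k
      linarith
    have hE' := mul_le_mul_of_nonneg_left hE hC
    have hfy : |f y * T n 1 t - f y * A 1 t| ≤ ‖f‖ * ‖T n 1 - A 1‖ := by
      rw [← mul_sub, abs_mul]
      exact mul_le_mul (f.norm_coe_le_norm y) (hdiff 1) (abs_nonneg _) (norm_nonneg _)
    rw [hz] at hAe
    have hε1 : ε * T n 1 t + ε * A 1 t ≤ ε * (‖T n 1 - A 1‖ + 2 * ‖A 1‖) := by
      rw [← mul_add]
      apply mul_le_mul_of_nonneg_left _ hε.le
      linarith [hd1.2]
    rw [ContinuousMap.sub_apply, Real.norm_eq_abs, abs_le]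
    rw [abs_le] at hTe hAe hfy
    constructor <;> linarith [hTe.1, hTe.2, hAe.1, hAe.2, hfy.1, hfy.2]
  rw [Metric.tendsto_atTop']
  intro e he
  set ε := e / (4 * (‖A 1‖ + 1)) with hεd
  have hε : 0 < ε := by positivity
  obtain ⟨C, hC, hb⟩ := key ε hε
  have hlim : Tendsto (fun n => ε * (‖T n 1 - A 1‖ + 2 * ‖A 1‖) + ‖f‖ * ‖T n 1 - A 1‖ +
      C * (‖T n (testP K α) - A (testP K α)‖ +
        ∑ k, 2 * ‖testQ K α k‖ * ‖T n (testQ K α k) - A (testQ K α k)‖ +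
        (∑ k, ‖testQ K α k‖ ^ 2) * ‖T n 1 - A 1‖)) atTop
      (nhds (ε * (0 + 2 * ‖A 1‖) + ‖f‖ * 0 + C * (0 + ∑ k, 2 * ‖testQ K α k‖ * 0 +
        (∑ k, ‖testQ K α k‖ ^ 2) * 0))) :=
    (((hT1.add_const _).const_mul _).add (hT1.const_mul _)).add
      (((hTp.add (tendsto_finsetSum _ fun k _ => (hTq k).const_mul _)).add
        (hT1.const_mul _)).const_mul _)
  have hlt : ε * (0 + 2 * ‖A 1‖) + ‖f‖ * 0 + C * (0 + ∑ k, 2 * ‖testQ K α k‖ * 0 +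
        (∑ k, ‖testQ K α k‖ ^ 2) * 0) < e := by
    simp only [mul_zero, Finset.sum_const_zero, add_zero, zero_add]
    have : ε * (4 * (‖A 1‖ + 1)) = e := by rw [hεd]; field_simp
    nlinarith [norm_nonneg (A 1)]
  obtain ⟨n0, hn0⟩ := eventually_atTop.1 (hlim.eventually (gt_mem_nhds hlt))
  refine ⟨n0, fun n hn => ?_⟩
  rw [Real.dist_eq, sub_zero, abs_of_nonneg (norm_nonneg _)]
  exact (hb n).trans_lt (hn0 n hn.le)
end

section
/- Let C_{2π}(ℝ) denote the Banach lattice of continuous 2π-periodic functions f : ℝ → ℝ with the sup-norm and pointwise order, and let T_n (n ∈ ℕ) and A be weakly nonlinear and monotone operators from C_{2π}(ℝ) into itself such that A(1) = 1 and A(3 + 2cos + 2sin) = (A(−1 − cos))² + (A(−1 − sin))². Then T_n(f) → A(f) uniformly for every f ∈ C_{2π}(ℝ) if and only if T_n(f) → A(f) uniformly for each of the four test functions 1, −1 − cos, −1 − sin, and 3 + 2cos + 2sin. -/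
open Filter

instance : Fact (0 < 2 * Real.pi) := ⟨by positivity⟩

instance : CompactSpace Real.Angle :=
  inferInstanceAs (CompactSpace (AddCircle (2 * Real.pi)))

/-- The cosine, as a continuous `2π`-periodic function (a function on the circle `ℝ/2πℤ`). -/
noncomputable def cosCM : C(Real.Angle, ℝ) := ⟨Real.Angle.cos, Real.Angle.continuous_cos⟩

/-- The sine, as a continuous `2π`-periodic function (a function on the circle `ℝ/2πℤ`). -/
noncomputable def sinCM : C(Real.Angle, ℝ) := ⟨Real.Angle.sin, Real.Angle.continuous_sin⟩


/-- monotone weakly nonlinear functional -/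
structure KorF (p : C(Real.Angle, ℝ) → ℝ) : Prop where
  sub : ∀ f g, p (f + g) ≤ p f + p g
  pos : ∀ a : ℝ, 0 ≤ a → ∀ f, p (a • f) = a * p f
  tr : ∀ f, ∀ a : ℝ, 0 ≤ a → p (f + a • 1) = p f + a * p 1
  mono : Monotone p

namespace KorF

variable {p : C(Real.Angle, ℝ) → ℝ}

theorem tr' (h : KorF p) (f : C(Real.Angle, ℝ)) (a : ℝ) : p (f + a • 1) = p f + a * p 1 := by
  rcases le_total 0 a with ha | ha
  · exact h.tr f a ha
  · have h1 := h.tr (f + a • 1) (-a) (by linarith)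
    rw [show f + a • (1 : C(Real.Angle, ℝ)) + (-a) • 1 = f by ext; simp] at h1
    linarith

theorem zero (h : KorF p) : p 0 = 0 := by
  have := h.pos 0 le_rfl 0
  simpa using this

theorem neg (h : KorF p) (f : C(Real.Angle, ℝ)) : 0 ≤ p f + p (-f) := by
  have := h.sub f (-f)
  rw [add_neg_cancel, h.zero] at this
  exact this

theorem test1 (h : KorF p) (f : C(Real.Angle, ℝ)) : p (-1 - f) = p (-f) - p 1 := by
  have := h.tr' (-f) (-1)
  rw [show -f + (-1 : ℝ) • (1 : C(Real.Angle, ℝ)) = -1 - f by ext; simp; ring] at this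
  linarith

theorem test2 (h : KorF p) :
    p (3 + (2 : ℝ) • cosCM + (2 : ℝ) • sinCM) = 2 * p (cosCM + sinCM) + 3 * p 1 := by
  have := h.tr' ((2 : ℝ) • (cosCM + sinCM)) 3
  rw [show (2 : ℝ) • (cosCM + sinCM) + (3 : ℝ) • (1 : C(Real.Angle, ℝ))
    = 3 + (2 : ℝ) • cosCM + (2 : ℝ) • sinCM by
      ext x
      have : (3 : C(Real.Angle, ℝ)) x = 3 := rfl
      simp [this]; ring, h.pos 2 (by norm_num)] at this
  exact this

theorem cos_le (h : KorF p) : p cosCM ≤ p (cosCM + sinCM) + p (-sinCM) := by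
  have := h.sub (cosCM + sinCM) (-sinCM)
  rwa [add_neg_cancel_right] at this

theorem sin_le (h : KorF p) : p sinCM ≤ p (cosCM + sinCM) + p (-cosCM) := by
  have := h.sub (cosCM + sinCM) (-cosCM)
  rwa [show cosCM + sinCM + -cosCM = sinCM by abel] at this

theorem half (h : KorF p) (h1 : p 1 = 1) (u v : ℝ) :
    p (u • cosCM + v • sinCM) ≤ (1 + u ^ 2 + v ^ 2) / 2 := by
  have h2 : p (((1 + u ^ 2 + v ^ 2) / 2) • 1) = (1 + u ^ 2 + v ^ 2) / 2 := by
    rw [h.pos _ (by positivity), h1, mul_one]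
  rw [← h2]
  apply h.mono
  intro x
  have := Real.Angle.cos_sq_add_sin_sq x
  simp [cosCM, sinCM]
  nlinarith [sq_nonneg (u - x.cos), sq_nonneg (v - x.sin)]

/-- The rigidity step. -/
theorem rigid (h : KorF p) (h1 : p 1 = 1)
    (hfe : p (3 + (2 : ℝ) • cosCM + (2 : ℝ) • sinCM) =
      (p (-1 - cosCM)) ^ 2 + (p (-1 - sinCM)) ^ 2) :
    (p (-cosCM)) ^ 2 + (p (-sinCM)) ^ 2 = 1 ∧
      p (cosCM + sinCM) = - p (-cosCM) - p (-sinCM) := by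
  rw [h.test2, h.test1, h.test1, h1] at hfe
  have hc := h.cos_le
  have hs := h.sin_le
  have hn := h.neg cosCM
  have hns := h.neg sinCM
  have hC : p (-cosCM) ≤ 1 := by
    rw [← h1]; apply h.mono; intro x
    have := Real.Angle.cos_sq_add_sin_sq x
    simp [cosCM]; nlinarith
  have hS : p (-sinCM) ≤ 1 := by
    rw [← h1]; apply h.mono; intro x
    have := Real.Angle.cos_sq_add_sin_sq x
    simp [sinCM]; nlinarith
  obtain ⟨C, hCe⟩ : ∃ C, C = p (-cosCM) := ⟨_, rfl⟩
  obtain ⟨S, hSe⟩ : ∃ S, S = p (-sinCM) := ⟨_, rfl⟩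
  obtain ⟨d, hde⟩ : ∃ d, d = p (cosCM + sinCM) + C + S := ⟨_, rfl⟩
  have hd0 : 0 ≤ d := by rw [hde, hCe, hSe]; linarith
  have hfe' : C ^ 2 + S ^ 2 = 1 + 2 * d := by
    rw [← hCe, ← hSe] at hfe; rw [hde]; linarith
  rw [← hCe] at hC hs hn ⊢
  rw [← hSe] at hS hc hns ⊢
  have hsin : p sinCM ≤ d - S := by linarith
  suffices hh : d = 0 by
    constructor
    · rw [hfe', hh]; ring
    · linarith
  have hhalf := h.half h1 (-C) (-S)
  have key : C ^ 2 + S ^ 2 ≤ p ((-C) • cosCM + (-S) • sinCM) → d = 0 := by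
    intro hk; nlinarith
  rcases le_total C 0 with hC0 | hC0
  · rcases le_total S 0 with hS0 | hS0
    · apply key
      have a1 := h.neg ((-C) • cosCM + (-S) • sinCM)
      have a2 := h.sub ((-C) • (-cosCM)) ((-S) • (-sinCM))
      rw [h.pos _ (by linarith), h.pos _ (by linarith), ← hCe, ← hSe,
        show (-C) • (-cosCM) + (-S) • (-sinCM) = -((-C) • cosCM + (-S) • sinCM) by
          ext; simp; ring] at a2
      linarith
    · apply key
      have a2 := h.sub ((-C) • cosCM + (-S) • sinCM) ((-C) • (-cosCM))
      rw [show (-C) • cosCM + (-S) • sinCM + (-C) • (-cosCM) = S • (-sinCM) by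
          ext; simp, h.pos _ hS0, h.pos _ (by linarith), ← hCe, ← hSe] at a2
      linarith
  · rcases le_total S 0 with hS0 | hS0
    · apply key
      have a2 := h.sub ((-C) • cosCM + (-S) • sinCM) ((-S) • (-sinCM))
      rw [show (-C) • cosCM + (-S) • sinCM + (-S) • (-sinCM) = C • (-cosCM) by
          ext; simp, h.pos _ hC0, h.pos _ (by linarith), ← hCe, ← hSe] at a2
      linarith
    · rcases le_total d S with hdS | hdS
      · have a2 := h.sub ((-C) • cosCM + (-(S - d)) • sinCM) ((S - d) • sinCM)
        rw [show (-C) • cosCM + (-(S - d)) • sinCM + (S - d) • sinCM = C • (-cosCM) by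
          ext; simp; ring, h.pos _ hC0, h.pos _ (by linarith), ← hCe] at a2
        have a3 := h.half h1 (-C) (-(S - d))
        have a4 : (S - d) * p sinCM ≤ (S - d) * (d - S) :=
          mul_le_mul_of_nonneg_left hsin (by linarith)
        have a5 : C ^ 2 + (S - d) ^ 2 ≤ 1 := by nlinarith
        have a6 : 0 ≤ d * (1 - S) := mul_nonneg hd0 (by linarith)
        have a7 : d ^ 2 ≤ 0 := by nlinarith
        exact pow_eq_zero_iff (two_ne_zero) |>.1 (le_antisymm a7 (sq_nonneg d))
      · have a1 : C ^ 2 ≤ 1 := by nlinarith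
        have a2 : S ^ 2 ≤ S := by nlinarith
        linarith

theorem mul_aux {c q r η : ℝ} (hc : |c| ≤ 1) (hη : 0 ≤ η)
    (hq : q ≤ -c + η) (hr : r ≤ c + η) :
    (0 ≤ c → c * q ≤ -c ^ 2 + η) ∧ (c ≤ 0 → (-c) * r ≤ -c ^ 2 + η) := by
  rw [abs_le] at hc
  constructor <;> intro h <;> nlinarith

theorem smul_neg_le (h : KorF p) {g : C(Real.Angle, ℝ)} {c η : ℝ} (hc : |c| ≤ 1) (hη : 0 ≤ η)
    (hq : p (-g) ≤ -c + η) (hr : p g ≤ c + η) : p ((-c) • g) ≤ -c ^ 2 + η := by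
  obtain ⟨m1, m2⟩ := mul_aux hc hη hq hr
  rcases le_total 0 c with h0 | h0
  · rw [show (-c) • g = c • (-g) by ext; simp, h.pos _ h0]; exact m1 h0
  · rw [h.pos _ (by linarith)]; exact m2 h0

theorem upper (h : KorF p) {θ : Real.Angle} {η : ℝ} (hη : 0 ≤ η)
    (h1 : p 1 ≤ 1 + η) (hc : p (-cosCM) ≤ -θ.cos + η) (hs : p (-sinCM) ≤ -θ.sin + η)
    (hc' : p cosCM ≤ θ.cos + η) (hs' : p sinCM ≤ θ.sin + η)
    {f : C(Real.Angle, ℝ)} {ε K : ℝ} (hε : 0 ≤ ε) (hK : 0 ≤ K)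
    (hf : ∀ t, f t - f θ ≤ ε + K * (1 - θ.cos * t.cos - θ.sin * t.sin)) :
    p f - f θ * p 1 ≤ ε * (1 + η) + K * (3 * η) := by
  have hsq := Real.Angle.cos_sq_add_sin_sq θ
  have b1 := h.smul_neg_le (abs_le_one_iff_mul_self_le_one.2 (by nlinarith)) hη hc hc'
  have b2 := h.smul_neg_le (abs_le_one_iff_mul_self_le_one.2 (by nlinarith)) hη hs hs'
  set g : C(Real.Angle, ℝ) := 1 + ((-θ.cos) • cosCM + (-θ.sin) • sinCM) with hg
  have b3 : p g ≤ 3 * η := by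
    have := h.sub 1 ((-θ.cos) • cosCM + (-θ.sin) • sinCM)
    have := h.sub ((-θ.cos) • cosCM) ((-θ.sin) • sinCM)
    linarith
  have b4 : p (f + (-f θ) • 1) ≤ p (ε • 1 + K • g) := by
    apply h.mono
    intro t
    have := hf t
    simp [hg, cosCM, sinCM]
    linarith
  have b5 := h.sub (ε • 1) (K • g)
  rw [h.pos _ hε, h.pos _ hK] at b5
  rw [h.tr'] at b4
  have b6 := mul_le_mul_of_nonneg_left b3 hK
  have b7 := mul_le_mul_of_nonneg_left h1 hε
  linarith

theorem est (h : KorF p) {θ : Real.Angle} {η : ℝ} (hη : 0 ≤ η)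
    (h1 : |p 1 - 1| ≤ η) (hc : p (-cosCM) ≤ -θ.cos + η) (hs : p (-sinCM) ≤ -θ.sin + η)
    (hc' : p cosCM ≤ θ.cos + η) (hs' : p sinCM ≤ θ.sin + η)
    {f : C(Real.Angle, ℝ)} {ε K : ℝ} (hε : 0 ≤ ε) (hK : 0 ≤ K)
    (hf : ∀ t, |f t - f θ| ≤ ε + K * (1 - θ.cos * t.cos - θ.sin * t.sin)) :
    |p f - f θ| ≤ ε * (1 + η) + K * (3 * η) + ‖f‖ * η := by
  have h1' : p 1 ≤ 1 + η := by have := (abs_le.1 h1).2; linarith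
  have u1 := h.upper hη h1' hc hs hc' hs' hε hK (f := f) (fun t => (le_abs_self _).trans (hf t))
  have u2 := h.upper hη h1' hc hs hc' hs' hε hK (f := -f) (fun t => by
    have := (neg_le_abs _).trans (hf t)
    simp only [ContinuousMap.neg_apply]; linarith)
  have u3 := h.neg f
  have u4 : |f θ * (p 1 - 1)| ≤ ‖f‖ * η := by
    rw [abs_mul]
    exact mul_le_mul (f.norm_coe_le_norm θ) h1 (abs_nonneg _) (norm_nonneg _)
  simp only [ContinuousMap.neg_apply] at u2
  rw [abs_le] at u4 ⊢
  constructor <;> linarith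

end KorF

theorem kor_modulus (f : C(Real.Angle, ℝ)) {ε : ℝ} (hε : 0 < ε) :
    ∃ K : ℝ, 0 ≤ K ∧ ∀ θ t : Real.Angle,
      |f t - f θ| ≤ ε + K * (1 - θ.cos * t.cos - θ.sin * t.sin) := by
  have hid : ∀ θ t : Real.Angle, 1 - θ.cos * t.cos - θ.sin * t.sin =
      ((θ.cos - t.cos) ^ 2 + (θ.sin - t.sin) ^ 2) / 2 := by
    intro θ t
    have := Real.Angle.cos_sq_add_sin_sq θ
    have := Real.Angle.cos_sq_add_sin_sq t
    linarith
  have hnn : ∀ θ t : Real.Angle, 0 ≤ 1 - θ.cos * t.cos - θ.sin * t.sin := by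
    intro θ t; rw [hid]; positivity
  let s : Set (Real.Angle × Real.Angle) := {q | ε ≤ |f q.2 - f q.1|}
  have hs : IsCompact s := by
    apply IsClosed.isCompact
    exact isClosed_le continuous_const (by fun_prop)
  let G : Real.Angle × Real.Angle → ℝ :=
    fun q => 1 - q.1.cos * q.2.cos - q.1.sin * q.2.sin
  have hG : Continuous G := by
    have c1 := Real.Angle.continuous_cos
    have c2 := Real.Angle.continuous_sin
    exact ((continuous_const.sub ((c1.comp continuous_fst).mul (c1.comp continuous_snd))).sub
      ((c2.comp continuous_fst).mul (c2.comp continuous_snd)))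
  rcases s.eq_empty_or_nonempty with he | hne
  · refine ⟨0, le_rfl, fun θ t => ?_⟩
    by_contra hcon
    have : (θ, t) ∈ s := by
      show ε ≤ |f t - f θ|
      linarith
    rw [he] at this
    exact this
  · obtain ⟨q, hq, hmin⟩ := hs.exists_isMinOn hne hG.continuousOn
    have hpos : 0 < G q := by
      rcases (hnn q.1 q.2).lt_or_eq with h0 | h0
      · exact h0
      · exfalso
        rw [hid] at h0
        have e1 : q.1.cos = q.2.cos := by nlinarith [sq_nonneg (q.1.sin - q.2.sin), sq_nonneg (q.1.cos - q.2.cos)]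
        have e2 : q.1.sin = q.2.sin := by nlinarith [sq_nonneg (q.1.sin - q.2.sin), sq_nonneg (q.1.cos - q.2.cos)]
        have e3 : q.1 = q.2 := by
          rw [← Real.Angle.coe_toReal q.1, ← Real.Angle.coe_toReal q.2] at e1 e2 ⊢
          exact Real.Angle.cos_sin_inj (by simpa using e1) (by simpa using e2)
        have : ε ≤ |f q.2 - f q.1| := hq
        rw [e3] at this
        simp at this
        linarith
    refine ⟨2 * ‖f‖ / G q, by positivity, fun θ t => ?_⟩
    by_cases hm : ε ≤ |f t - f θ|
    · have h1 : G q ≤ G (θ, t) := hmin (show (θ, t) ∈ s from hm)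
      have h2 : |f t - f θ| ≤ 2 * ‖f‖ := by
        have a := f.norm_coe_le_norm t
        have b := f.norm_coe_le_norm θ
        have := norm_sub_le (f t) (f θ)
        rw [Real.norm_eq_abs] at this
        linarith
      have h3 : 2 * ‖f‖ ≤ 2 * ‖f‖ / G q * G (θ, t) := by
        rw [div_mul_eq_mul_div, le_div_iff₀ hpos]
        exact mul_le_mul_of_nonneg_left h1 (by positivity)
      have h4 : G (θ, t) = 1 - θ.cos * t.cos - θ.sin * t.sin := rfl
      rw [h4] at h3
      linarith
    · have := mul_nonneg (show 0 ≤ 2 * ‖f‖ / G q by positivity) (hnn θ t)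
      push Not at hm
      linarith

theorem kor_angle {c s : ℝ} (h : c ^ 2 + s ^ 2 = 1) :
    ∃ θ : Real.Angle, θ.cos = c ∧ θ.sin = s := by
  have hn : ‖(⟨c, s⟩ : ℂ)‖ = 1 := by
    have h2 : ‖(⟨c, s⟩ : ℂ)‖ ^ 2 = 1 := by
      rw [Complex.sq_norm, Complex.normSq_mk]; linarith
    nlinarith [norm_nonneg (⟨c, s⟩ : ℂ)]
  refine ⟨(Complex.arg ⟨c, s⟩ : ℝ), ?_, ?_⟩
  · rw [Real.Angle.cos_coe, Complex.cos_arg (by intro h0; rw [h0] at hn; simp at hn), hn]; simp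
  · rw [Real.Angle.sin_coe, Complex.sin_arg, hn]; simp

theorem kor_F (B : C(Real.Angle, ℝ) → C(Real.Angle, ℝ))
    (hsub : ∀ f g : C(Real.Angle, ℝ), B (f + g) ≤ B f + B g)
    (hpos : ∀ (a : ℝ), 0 ≤ a → ∀ f : C(Real.Angle, ℝ), B (a • f) = a • B f)
    (htr : ∀ f : C(Real.Angle, ℝ), ∀ a : ℝ, 0 ≤ a → B (f + a • 1) = B f + a • B 1)
    (hmono : Monotone B) (x : Real.Angle) : KorF (fun f => B f x) where
  sub f g := hsub f g x
  pos a ha f := by simp [hpos a ha f]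
  tr f a ha := by simp [htr f a ha]
  mono f g hfg := hmono hfg x

/-- **Korovkin-type theorem for `2π`-periodic functions (Theorem 5).** If `T_n` and `A` are
weakly nonlinear and monotone operators on the space `C_{2π}(ℝ)` of continuous `2π`-periodic
functions with `A 1 = 1` and `A(3 + 2cos + 2sin) = (A(−1−cos))² + (A(−1−sin))²`, then
`T_n f → A f` uniformly for every `f` iff this occurs for the four test functions
`1, −1−cos, −1−sin, 3 + 2cos + 2sin`. -/
theorem korovkin_trigonometric
    (T : ℕ → C(Real.Angle, ℝ) → C(Real.Angle, ℝ)) (A : C(Real.Angle, ℝ) → C(Real.Angle, ℝ))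
    (hTsub : ∀ n, ∀ f g : C(Real.Angle, ℝ), T n (f + g) ≤ T n f + T n g)
    (hTpos : ∀ n, ∀ (a : ℝ), 0 ≤ a → ∀ f : C(Real.Angle, ℝ), T n (a • f) = a • T n f)
    (hTtr : ∀ n, ∀ f : C(Real.Angle, ℝ), ∀ a : ℝ, 0 ≤ a →
      T n (f + a • 1) = T n f + a • T n 1)
    (hTmono : ∀ n, Monotone (T n))
    (hAsub : ∀ f g : C(Real.Angle, ℝ), A (f + g) ≤ A f + A g)
    (hApos : ∀ (a : ℝ), 0 ≤ a → ∀ f : C(Real.Angle, ℝ), A (a • f) = a • A f)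
    (hAtr : ∀ f : C(Real.Angle, ℝ), ∀ a : ℝ, 0 ≤ a → A (f + a • 1) = A f + a • A 1)
    (hAmono : Monotone A)
    (hA1 : A 1 = 1)
    (hAfe : A (3 + (2 : ℝ) • cosCM + (2 : ℝ) • sinCM) =
      (A (-1 - cosCM)) ^ 2 + (A (-1 - sinCM)) ^ 2) :
    (∀ f : C(Real.Angle, ℝ), Tendsto (fun n => ‖T n f - A f‖) atTop (nhds 0)) ↔
      (Tendsto (fun n => ‖T n 1 - A 1‖) atTop (nhds 0) ∧
       Tendsto (fun n => ‖T n (-1 - cosCM) - A (-1 - cosCM)‖) atTop (nhds 0) ∧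
       Tendsto (fun n => ‖T n (-1 - sinCM) - A (-1 - sinCM)‖) atTop (nhds 0) ∧
       Tendsto (fun n => ‖T n (3 + (2 : ℝ) • cosCM + (2 : ℝ) • sinCM) -
         A (3 + (2 : ℝ) • cosCM + (2 : ℝ) • sinCM)‖) atTop (nhds 0)) := by
  constructor
  · intro h
    exact ⟨h _, h _, h _, h _⟩
  rintro ⟨t1, t2, t3, t4⟩ f
  have hA : ∀ x, ∃ θ : Real.Angle, A (-cosCM) x = -θ.cos ∧ A (-sinCM) x = -θ.sin ∧
      A (cosCM + sinCM) x = θ.cos + θ.sin ∧ A f x = f θ := by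
    intro x
    have hF := kor_F A hAsub hApos hAtr hAmono x
    have hx1 : A 1 x = 1 := by rw [hA1]; rfl
    obtain ⟨r1, r2⟩ := hF.rigid hx1 (by
      show A _ x = _
      rw [hAfe]; rfl)
    obtain ⟨θ, hθ1, hθ2⟩ := kor_angle (c := -A (-cosCM) x) (s := -A (-sinCM) x)
      (by rw [neg_sq, neg_sq]; exact r1)
    have e1 : A (-cosCM) x = -θ.cos := by rw [hθ1]; ring
    have e2 : A (-sinCM) x = -θ.sin := by rw [hθ2]; ring
    have e3 : A (cosCM + sinCM) x = θ.cos + θ.sin := by rw [hθ1, hθ2]; linarith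
    refine ⟨θ, e1, e2, e3, ?_⟩
    have hc := hF.cos_le
    have hs := hF.sin_le
    rw [e2, e3] at hc
    rw [e1, e3] at hs
    refine eq_of_forall_dist_le fun ε hε => ?_
    obtain ⟨K, hK, hf⟩ := kor_modulus f hε
    have := hF.est (θ := θ) le_rfl (by simp [hx1]) (by simp [e1]) (by simp [e2])
      (by linarith) (by linarith) hε.le hK (hf θ)
    rw [Real.dist_eq]
    linarith
  rw [Metric.tendsto_nhds]
  intro e he
  obtain ⟨K, hK, hf⟩ := kor_modulus f (show 0 < e / 8 by positivity)
  set M : ℝ := 3 * K + ‖f‖ + 1 with hM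
  have hMpos : 0 < M := by positivity
  obtain ⟨η, hη0, hη1, hηM⟩ : ∃ η : ℝ, 0 < η ∧ η ≤ 1 ∧ η * M ≤ e / 4 :=
    ⟨min 1 (e / 4 / M), by positivity, min_le_left _ _, by
      rw [← le_div_iff₀ hMpos]; exact min_le_right _ _⟩
  have hδ : 0 < η / 4 := by positivity
  filter_upwards [(Metric.tendsto_nhds.1 t1) _ hδ, (Metric.tendsto_nhds.1 t2) _ hδ,
    (Metric.tendsto_nhds.1 t3) _ hδ, (Metric.tendsto_nhds.1 t4) _ hδ] with n s1 s2 s3 s4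
  rw [Real.dist_eq, sub_zero, abs_norm] at s1 s2 s3 s4 ⊢
  refine lt_of_le_of_lt ((ContinuousMap.norm_le _ (show 0 ≤ e / 2 by positivity)).2 ?_)
    (half_lt_self he)
  intro x
  obtain ⟨θ, e1, e2, e3, e4⟩ := hA x
  have hF := kor_F (T n) (hTsub n) (hTpos n) (hTtr n) (hTmono n) x
  have hFA := kor_F A hAsub hApos hAtr hAmono x
  have hx1 : A 1 x = 1 := by rw [hA1]; rfl
  have q1 := ((T n 1 - A 1).norm_coe_le_norm x).trans s1.le
  have q2 := ((T n (-1 - cosCM) - A (-1 - cosCM)).norm_coe_le_norm x).trans s2.le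
  have q3 := ((T n (-1 - sinCM) - A (-1 - sinCM)).norm_coe_le_norm x).trans s3.le
  have q4 := ((T n (3 + (2 : ℝ) • cosCM + (2 : ℝ) • sinCM) -
         A (3 + (2 : ℝ) • cosCM + (2 : ℝ) • sinCM)).norm_coe_le_norm x).trans s4.le
  rw [ContinuousMap.sub_apply, Real.norm_eq_abs] at q1 q2 q3 q4 ⊢
  have w1 := hF.test1 cosCM
  have w2 := hF.test1 sinCM
  have w3 := hF.test2
  have v1 := hFA.test1 cosCM
  have v2 := hFA.test1 sinCM
  have v3 := hFA.test2
  have hc := hF.cos_le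
  have hs := hF.sin_le
  rw [w1, v1, e1, hx1] at q2
  rw [w2, v2, e2, hx1] at q3
  rw [w3, v3, e3, hx1] at q4
  rw [hx1] at q1
  have q1' := abs_le.1 q1
  have q2' := abs_le.1 q2
  have q3' := abs_le.1 q3
  have q4' := abs_le.1 q4
  have := hF.est (θ := θ) hη0.le (q1.trans (by linarith)) (by linarith) (by linarith)
      (by linarith) (by linarith) (show 0 ≤ e / 8 by positivity) hK (hf θ)
  rw [e4]
  refine this.trans ?_
  rw [hM] at hηM
  nlinarith
end

section
/- Let φ : [0,1] → [0,1] be a continuous function and for each n ∈ ℕ define the operator T_n : C([0,1]) → C([0,1]) by T_n(f)(x) = Σ_{k=0}^n C(n,k)·φ(x)^k·(1 − φ(x))^{n−k} · sup{ f(t) : k/(n+1) ≤ t ≤ (k+1)/(n+1) }. Then for every f ∈ C([0,1]), T_n(f) → f ∘ φ uniformly on [0,1] as n → ∞. -/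
open Filter

/-- **Convergence of nonlinear Bernstein-type operators (Example 1).** For a continuous
`φ : [0,1] → [0,1]`, the nonlinear operators
`T_n(f)(x) = Σ_{k=0}^n C(n,k) φ(x)^k (1−φ(x))^{n−k} · sup_{k/(n+1) ≤ t ≤ (k+1)/(n+1)} f(t)`
converge uniformly on `[0,1]` to `f ∘ φ`, for every `f ∈ C([0,1])`. -/
theorem bernstein_type_sup_operators_tendstoUniformly
    (φ : Set.Icc (0 : ℝ) 1 → Set.Icc (0 : ℝ) 1) (hφ : Continuous φ)
    (f : C(Set.Icc (0 : ℝ) 1, ℝ)) :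
    TendstoUniformly
      (fun (n : ℕ) (x : Set.Icc (0 : ℝ) 1) =>
        ∑ k ∈ Finset.range (n + 1),
          (n.choose k : ℝ) * (φ x : ℝ) ^ k * (1 - (φ x : ℝ)) ^ (n - k) *
            sSup (f '' {t : Set.Icc (0 : ℝ) 1 |
              (k : ℝ) / (n + 1) ≤ (t : ℝ) ∧ (t : ℝ) ≤ ((k : ℝ) + 1) / (n + 1)}))
      (fun x => f (φ x)) atTop := by
  rw [Metric.tendstoUniformly_iff]
  intro ε hε
  have huc := CompactSpace.uniformContinuous_of_continuous (map_continuous f)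
  obtain ⟨δ, hδ, hf⟩ := Metric.uniformContinuous_iff.1 huc (ε / 3) (by positivity)
  have hB := (Metric.tendsto_nhds.1 (bernsteinApproximation_uniform f)) (ε / 3) (by positivity)
  have hN := (tendsto_one_div_add_atTop_nhds_zero_nat (𝕜 := ℝ)).eventually_lt_const hδ
  filter_upwards [hB, hN, eventually_ne_atTop 0] with n hBn hn hn0 x
  have hn1 : (0 : ℝ) < n := by positivity
  have h1 : dist (bernsteinApproximation n f (φ x)) (f (φ x)) < ε / 3 :=
    lt_of_le_of_lt (ContinuousMap.dist_apply_le_dist _) hBn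
  have key : ∀ k : Fin (n + 1), |sSup (f '' {t : Set.Icc (0 : ℝ) 1 |
      ((k : ℕ) : ℝ) / (n + 1) ≤ (t : ℝ) ∧ (t : ℝ) ≤ (((k : ℕ) : ℝ) + 1) / (n + 1)})
        - f (bernstein.z k)| ≤ ε / 3 := by
    intro k
    have hk : ((k : ℕ) : ℝ) ≤ n := by exact_mod_cast k.is_le
    have hk0 : (0 : ℝ) ≤ ((k : ℕ) : ℝ) := by positivity
    have hz : ((k : ℕ) : ℝ) / (n + 1) ≤ ((k : ℕ) : ℝ) / n ∧
        ((k : ℕ) : ℝ) / n ≤ (((k : ℕ) : ℝ) + 1) / (n + 1) := by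
      constructor
      · gcongr
        linarith
      · rw [div_le_div_iff₀ hn1 (by positivity)]
        nlinarith
    have hub : ∀ y ∈ f '' {t : Set.Icc (0 : ℝ) 1 |
      ((k : ℕ) : ℝ) / (n + 1) ≤ (t : ℝ) ∧ (t : ℝ) ≤ (((k : ℕ) : ℝ) + 1) / (n + 1)},
        y ≤ f (bernstein.z k) + ε / 3 := by
      rintro _ ⟨t, ⟨ht1, ht2⟩, rfl⟩
      have hd : dist t (bernstein.z k) < δ := by
        refine lt_of_le_of_lt ?_ hn
        rw [Subtype.dist_eq, Real.dist_eq]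
        change |(t : ℝ) - ((k : ℕ) : ℝ) / n| ≤ _
        rw [add_div] at ht2 hz
        rw [abs_le]
        constructor <;> linarith [hz.1, hz.2]
      have := hf hd
      rw [Real.dist_eq] at this
      linarith [(abs_lt.1 this).2]
    have hmem : f (bernstein.z k) ∈ f '' {t : Set.Icc (0 : ℝ) 1 |
      ((k : ℕ) : ℝ) / (n + 1) ≤ (t : ℝ) ∧ (t : ℝ) ≤ (((k : ℕ) : ℝ) + 1) / (n + 1)} :=
      ⟨bernstein.z k, hz, rfl⟩
    have hle := csSup_le ⟨_, hmem⟩ hub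
    have hge := le_csSup ⟨_, hub⟩ hmem
    rw [abs_le]
    constructor <;> linarith
  rw [Finset.sum_range]
  simp only [← bernstein_apply]
  have h2 : |∑ k : Fin (n + 1), bernstein n k (φ x) * sSup (f '' {t : Set.Icc (0 : ℝ) 1 |
      ((k : ℕ) : ℝ) / (n + 1) ≤ (t : ℝ) ∧ (t : ℝ) ≤ (((k : ℕ) : ℝ) + 1) / (n + 1)})
        - bernsteinApproximation n f (φ x)| ≤ ε / 3 := by
    rw [bernsteinApproximation.apply, ← Finset.sum_sub_distrib]
    simp only [smul_eq_mul, ← mul_sub]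
    refine (Finset.abs_sum_le_sum_abs _ _).trans ?_
    calc _ ≤ ∑ k : Fin (n + 1), bernstein n k (φ x) * (ε / 3) := by
          refine Finset.sum_le_sum fun k _ => ?_
          rw [abs_mul, abs_of_nonneg bernstein_nonneg]
          exact mul_le_mul_of_nonneg_left (key k) bernstein_nonneg
      _ = ε / 3 := by rw [← Finset.sum_mul, bernstein.probability, one_mul]
  rw [Real.dist_eq] at h1 ⊢
  rw [abs_lt] at h1 ⊢
  rw [abs_le] at h2
  constructor <;> linarith [h1.1, h1.2, h2.1, h2.2]
end
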